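/- arXiv:1603.02533 — 3 statements merged into one kernel-verified Lean document; each statement's English description precedes it below -/
import Mathlib

section
/- Let p : ℝ^n × ℝ^m → ℝ^n and q : ℝ^n × ℝ^m → ℝ^m be homogeneous polynomials of degrees N ≥ 2 and M ≥ 2 respectively. Then the constants A_p, B_q, B_p, a_p and b_p associated with V_ρ are finite and satisfy |a_p| ≤ b_p, B_p ≥ A_p, a_p ≥ A_p/N and B_p ≥ N a_p; in particular if a_p > 0 then B_p ≥ N a_p > 0. Moreover, if 0 < ρ̄ ≤ ρ and Ā_p, B̄_p, B̄_q, ā_p, b̄_p denote the corresponding constants computed on V_{ρ̄}, then Ā_p ≥ A_p, B̄_p ≤ B_p, B̄_q ≥ B_q, ā_p ≥ a_p and b̄_p = b_p. -/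
open Metric Set Filter Asymptotics Topology

noncomputable section

section Defs

variable {E F G : Type*} [NormedAddCommGroup E] [NormedSpace ℝ E]
  [NormedAddCommGroup F] [NormedSpace ℝ F] [NormedAddCommGroup G] [NormedSpace ℝ G]

/-- `p` is (the diagonal of) a continuous homogeneous polynomial map of degree `N`. -/
def IsHomogPoly (N : ℕ) (p : E → G) : Prop :=
  ∃ P : ContinuousMultilinearMap ℝ (fun _ : Fin N => E) G, ∀ x, p x = P fun _ => x

/-- positively homogeneous function of degree `j`. -/
def IsHomogFun (j : ℕ) (f : E → G) : Prop :=
  ∀ t : ℝ, 0 < t → ∀ x : E, f (t • x) = t ^ j • f x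

/-- `V` is star-shaped with respect to the origin: `0 ∈ ∂V` and `t • x ∈ V` for `x ∈ V`,
`t ∈ (0,1)`. -/
def StarShaped0 (V : Set E) : Prop :=
  0 ∈ frontier V ∧ ∀ x ∈ V, ∀ t : ℝ, t ∈ Set.Ioo (0 : ℝ) 1 → t • x ∈ V

/-- `V_ρ = V ∩ B_ρ`. -/
def Vrho (V : Set E) (ρ : ℝ) : Set E := V ∩ ball 0 ρ

/-- `h(x) = O(‖x‖^k)` on the set `S` (real exponent, global constant). -/
def BigOOn (h : E → G) (S : Set E) (k : ℝ) : Prop :=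
  ∃ C : ℝ, ∀ x ∈ S, ‖h x‖ ≤ C * ‖x‖ ^ k

/-- The constant `a_p`. -/
def apC (p : E × F → E) (V : Set E) (ρ : ℝ) (N : ℕ) : ℝ :=
  -sSup ((fun x : E => (‖x + p (x, 0)‖ - ‖x‖) / ‖x‖ ^ N) '' Vrho V ρ)

/-- The constant `b_p`. -/
def bpC (p : E × F → E) (V : Set E) (ρ : ℝ) (N : ℕ) : ℝ :=
  sSup ((fun x : E => ‖p (x, 0)‖ / ‖x‖ ^ N) '' Vrho V ρ)

/-- The constant `A_p`. -/
def ApC (p : E × F → E) (V : Set E) (ρ : ℝ) (N : ℕ) : ℝ :=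
  -sSup ((fun x : E =>
      (‖ContinuousLinearMap.id ℝ E + fderiv ℝ (fun z : E => p (z, 0)) x‖ - 1) / ‖x‖ ^ (N - 1))
    '' Vrho V ρ)

/-- The constant `B_p`. -/
def BpC (p : E × F → E) (V : Set E) (ρ : ℝ) (N : ℕ) : ℝ :=
  sSup ((fun x : E =>
      (‖ContinuousLinearMap.id ℝ E - fderiv ℝ (fun z : E => p (z, 0)) x‖ - 1) / ‖x‖ ^ (N - 1))
    '' Vrho V ρ)

/-- The constant `B_q`. -/
def BqC (q : E × F → F) (V : Set E) (ρ : ℝ) (M : ℕ) : ℝ :=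
  -sSup ((fun x : E =>
      (‖ContinuousLinearMap.id ℝ F - fderiv ℝ (fun y : F => q (x, y)) 0‖ - 1) / ‖x‖ ^ (M - 1))
    '' Vrho V ρ)

/-- The constant `c_p`. -/
def cpC (p : E × F → E) (q : E × F → F) (V : Set E) (ρ : ℝ) (N M : ℕ) : ℝ :=
  if BqC q V ρ M ≤ 0 then apC p V ρ N else bpC p V ρ N

/-- The constant `d_p`. -/
def dpC (p : E × F → E) (V : Set E) (ρ : ℝ) (N : ℕ) : ℝ :=
  if ApC p V ρ N ≤ 0 then apC p V ρ N else bpC p V ρ N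

/-- `η = 1 + N - L`, `L = min{N,M}`. -/
def etaC (N M : ℕ) : ℝ := 1 + (N : ℝ) - (min N M : ℝ)

/-- `ℓ₀ = N - 1 + B_p/a_p + max{η - A_p/d_p, 0}`. -/
def ell0C (p : E × F → E) (V : Set E) (ρ : ℝ) (N M : ℕ) : ℝ :=
  (N : ℝ) - 1 + BpC p V ρ N / apC p V ρ N + max (etaC N M - ApC p V ρ N / dpC p V ρ N) 0

/-- `ℓ̃ = N - 1 + B_p/a_p + (η - 1)`. -/
def elltC (p : E × F → E) (V : Set E) (ρ : ℝ) (N M : ℕ) : ℝ :=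
  (N : ℝ) - 1 + BpC p V ρ N / apC p V ρ N + (etaC N M - 1)

/-- The optimal constant in hypothesis H3. -/
def CIC (p : E × F → E) (V : Set E) (ρ : ℝ) (N : ℕ) : ℝ :=
  sInf ((fun x : E => infDist (x + p (x, 0)) (Vrho V ρ)ᶜ / ‖x‖ ^ N) '' Vrho V ρ)

/-- Hypothesis H1. -/
def HypH1 (p : E × F → E) (V : Set E) (ρ : ℝ) (N : ℕ) : Prop := 0 < apC p V ρ N

/-- Hypothesis H2. -/
def HypH2 (p : E × F → E) (q : E × F → F) (V : Set E) (ρ : ℝ) (N M : ℕ) : Prop :=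
  (∀ x ∈ Vrho V ρ, q (x, 0) = 0) ∧
  (M < N → 0 < BqC q V ρ M) ∧ (M = N → -(N : ℝ) * apC p V ρ N < BqC q V ρ M)

/-- Hypothesis H3. -/
def HypH3 (p : E × F → E) (V : Set E) (ρ : ℝ) (N : ℕ) : Prop :=
  ∃ C > (0 : ℝ), ∀ x ∈ Vrho V ρ, C * ‖x‖ ^ N ≤ infDist (x + p (x, 0)) (Vrho V ρ)ᶜ

/-- Hypothesis H1'. -/
def HypH1' (p : E × F → E) (V : Set E) (ρ : ℝ) (N M : ℕ) : Prop :=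
  0 < apC p V ρ N ∧ (N < M → -1 < ApC p V ρ N / dpC p V ρ N)

/-- Hypothesis H2'. -/
def HypH2' (p : E × F → E) (q : E × F → F) (V : Set E) (ρ : ℝ) (N M : ℕ) : Prop :=
  (∀ x ∈ Vrho V ρ, q (x, 0) = 0) ∧
  (M < N → 0 < BqC q V ρ M) ∧
  (M = N → max (1 - ApC p V ρ N / dpC p V ρ N) 0 < 2 + BqC q V ρ M / cpC p q V ρ N M)

/-- `F` is in parabolic form of degrees `(N, M)` on `U`. -/
def ParabolicForm (U : Set (E × F)) (Fm : E × F → E × F) (p : E × F → E) (q : E × F → F)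
    (N M : ℕ) : Prop :=
  2 ≤ N ∧ 2 ≤ M ∧ IsHomogPoly N p ∧ IsHomogPoly M q ∧
    (fun z : E × F => (Fm z).1 - z.1 - p z) =O[𝓝[U] 0] (fun z : E × F => ‖z‖ ^ (N + 1)) ∧
    (fun z : E × F => (Fm z).2 - z.2 - q z) =O[𝓝[U] 0] (fun z : E × F => ‖z‖ ^ (M + 1))

/-- The local stable set `W^s_{V,ρ}` of the origin. -/
def stableSetLoc (Fm : E × F → E × F) (U : Set (E × F)) (V : Set E) (ρ : ℝ) : Set (E × F) :=
  {z ∈ U | (∀ k : ℕ, (Fm^[k] z).1 ∈ Vrho V ρ) ∧ Tendsto (fun k => Fm^[k] z) atTop (𝓝 0)}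

/-- `f` is `C¹` at the origin in the sense of the paper (Definition 2.3). -/
def C1AtOrigin (f : E → G) (S : Set E) : Prop :=
  (∃ ε > (0 : ℝ), ContDiffOn ℝ 1 f ((S ∩ ball 0 ε) \ {0})) ∧
  ∃ L : E →L[ℝ] G, Tendsto (fun x => fderivWithin ℝ f S x) (𝓝[S \ {0}] 0) (𝓝 L)

/-- `c < r` where `r` is an extended natural smoothness exponent. -/
def ltSmooth (c : ℝ) (r : ℕ∞) : Prop := ∃ k : ℕ, c < (k : ℝ) ∧ (k : ℕ∞) ≤ r

/-- The regularity degree `r_d`. -/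
def rdC (p : E × F → E) (V : Set E) (ρ : ℝ) (N M : ℕ) (r : ℕ) : ℕ :=
  sSup {k : ℕ |
    (etaC N M - ApC p V ρ N / dpC p V ρ N) * k < (r : ℝ) - BpC p V ρ N / apC p V ρ N - N + 1}

/-- The regularity degree `r_f` of the formal approximation. -/
def rfC (p : E × F → E) (q : E × F → F) (V : Set E) (ρ : ℝ) (N M : ℕ) : ℕ :=
  if M = N then
    sSup {k : ℕ | (1 - ApC p V ρ N / dpC p V ρ N) * k < 2 + BqC q V ρ M / cpC p q V ρ N M}
  else sSup {k : ℕ | (1 - ApC p V ρ N / dpC p V ρ N) * k < 2}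

end Defs

theorem homog_aux {E G : Type*} [NormedAddCommGroup E] [NormedSpace ℝ E]
    [NormedAddCommGroup G] [NormedSpace ℝ G] {N : ℕ} (hN : 2 ≤ N) {p : E → G}
    (hp : IsHomogPoly N p) :
    (∀ (t : ℝ) (x : E), p (t • x) = t ^ N • p x) ∧
    ∃ C : ℝ, 0 ≤ C ∧ ∀ x, ‖p x‖ ≤ C * ‖x‖ ^ N ∧ ∃ D : E →L[ℝ] G, HasFDerivAt p D x ∧
      ‖D‖ ≤ C * ‖x‖ ^ (N - 1) ∧ D x = (N : ℝ) • p x := by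
  obtain ⟨P, hP⟩ := hp
  have hpe : p = fun x => P (fun _ => x) := funext hP
  refine ⟨fun t x => ?_, (N : ℝ) * ‖P‖, by positivity, fun x => ⟨?_, ?_⟩⟩
  · rw [hP, hP]
    have := P.map_smul_univ (fun _ => t) (fun _ => x)
    simpa using this
  · rw [hP]
    have h1 := P.le_opNorm (fun _ => x)
    simp only [Finset.prod_const, Finset.card_univ, Fintype.card_fin] at h1
    have h2 : (1 : ℝ) ≤ N := by exact_mod_cast (by omega : 1 ≤ N)
    have h3 : 0 ≤ ‖P‖ * ‖x‖ ^ N := by positivity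
    nlinarith
  · let J : E →L[ℝ] (Fin N → E) := ContinuousLinearMap.pi fun _ => ContinuousLinearMap.id ℝ E
    have hJ : ∀ x, J x = fun _ => x := fun x => rfl
    have hd := (P.hasFDerivAt (J x)).comp x J.hasFDerivAt
    refine ⟨(P.linearDeriv (J x)).comp J, ?_, ?_, ?_⟩
    · rw [hpe]; exact hd
    · refine ContinuousLinearMap.opNorm_le_bound _ (by positivity) fun y => ?_
      simp only [ContinuousLinearMap.comp_apply, ContinuousMultilinearMap.linearDeriv_apply, hJ]
      refine (norm_sum_le _ _).trans ?_
      have : ∀ i ∈ (Finset.univ : Finset (Fin N)),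
          ‖P (Function.update (fun _ => x) i y)‖ ≤ ‖P‖ * (‖y‖ * ‖x‖ ^ (N - 1)) := by
        intro i _
        refine (P.le_opNorm _).trans (le_of_eq ?_)
        congr 1
        rw [← Finset.mul_prod_erase _ _ (Finset.mem_univ i)]
        simp only [Function.update_self]
        congr 1
        rw [Finset.prod_congr rfl (g := fun _ => ‖x‖)]
        · simp
        · intro j hj
          rw [Function.update_of_ne (Finset.ne_of_mem_erase hj)]
      refine (Finset.sum_le_sum this).trans (le_of_eq ?_)
      simp
      ring
    · simp only [ContinuousLinearMap.comp_apply, ContinuousMultilinearMap.linearDeriv_apply, hJ]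
      rw [hP]
      simp [Function.update_eq_self, Nat.cast_smul_eq_nsmul]

/-- Lemma 2.2: finiteness, basic inequalities and monotonicity in `ρ`
of the constants `A_p, B_q, B_p, a_p, b_p` associated with `V_ρ`. -/
theorem parabolic_constants_basic_properties
    {E F : Type*} [NormedAddCommGroup E] [NormedSpace ℝ E]
    [NormedAddCommGroup F] [NormedSpace ℝ F]
    (N M : ℕ) (hN : 2 ≤ N) (hM : 2 ≤ M)
    (p : E × F → E) (q : E × F → F) (hp : IsHomogPoly N p) (hq : IsHomogPoly M q)
    (V : Set E) (hVopen : IsOpen V) (hVstar : StarShaped0 V) (ρ : ℝ) (hρ : 0 < ρ) :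
    -- the constants are finite, i.e. the defining suprema are over nonempty bounded sets
    ((Vrho V ρ).Nonempty ∧
      BddAbove ((fun x : E => (‖x + p (x, 0)‖ - ‖x‖) / ‖x‖ ^ N) '' Vrho V ρ) ∧
      BddAbove ((fun x : E => ‖p (x, 0)‖ / ‖x‖ ^ N) '' Vrho V ρ) ∧
      BddAbove ((fun x : E =>
          (‖ContinuousLinearMap.id ℝ E + fderiv ℝ (fun z : E => p (z, 0)) x‖ - 1) / ‖x‖ ^ (N - 1))
        '' Vrho V ρ) ∧
      BddAbove ((fun x : E =>
          (‖ContinuousLinearMap.id ℝ E - fderiv ℝ (fun z : E => p (z, 0)) x‖ - 1) / ‖x‖ ^ (N - 1))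
        '' Vrho V ρ) ∧
      BddAbove ((fun x : E =>
          (‖ContinuousLinearMap.id ℝ F - fderiv ℝ (fun y : F => q (x, y)) 0‖ - 1) / ‖x‖ ^ (M - 1))
        '' Vrho V ρ)) ∧
    -- |a_p| ≤ b_p, A_p ≤ B_p, A_p/N ≤ a_p, N a_p ≤ B_p
    |apC p V ρ N| ≤ bpC p V ρ N ∧
    ApC p V ρ N ≤ BpC p V ρ N ∧
    ApC p V ρ N / N ≤ apC p V ρ N ∧
    (N : ℝ) * apC p V ρ N ≤ BpC p V ρ N ∧
    (0 < apC p V ρ N → 0 < (N : ℝ) * apC p V ρ N ∧ (N : ℝ) * apC p V ρ N ≤ BpC p V ρ N) ∧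
    -- monotonicity with respect to the radius
    (∀ ρ' : ℝ, 0 < ρ' → ρ' ≤ ρ →
      ApC p V ρ N ≤ ApC p V ρ' N ∧
      BpC p V ρ' N ≤ BpC p V ρ N ∧
      BqC q V ρ M ≤ BqC q V ρ' M ∧
      apC p V ρ N ≤ apC p V ρ' N ∧
      bpC p V ρ' N = bpC p V ρ N) := by
  classical
  obtain ⟨h0, hst⟩ := hVstar
  have h0V : (0 : E) ∉ V := by
    intro h
    rw [frontier, hVopen.interior_eq] at h0
    exact h0.2 h
  have hne : ∀ r : ℝ, 0 < r → (Vrho V r).Nonempty := by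
    intro r hr
    obtain ⟨y, hy, hyV⟩ := Metric.mem_closure_iff.1 (frontier_subset_closure h0) r hr
    exact ⟨y, hy, by simpa [dist_comm] using hyV⟩
  have hpos : ∀ r x, x ∈ Vrho V r → 0 < ‖x‖ := by
    intro r x hx
    rw [norm_pos_iff]
    rintro rfl
    exact h0V hx.1
  have hsub : ∀ r, r ≤ ρ → Vrho V r ⊆ Vrho V ρ := fun r hr =>
    Set.inter_subset_inter_right _ (Metric.ball_subset_ball hr)
  obtain ⟨hhom, Cp, hCp, hpx⟩ := homog_aux hN hp
  obtain ⟨-, Cq, hCq, hqx⟩ := homog_aux hM hq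
  have hz : ∀ x : E, ‖((x, 0) : E × F)‖ = ‖x‖ := fun x => by simp [Prod.norm_def]
  have hb : ∀ x : E, ‖p (x, 0)‖ ≤ Cp * ‖x‖ ^ N := fun x => by
    have := (hpx (x, 0)).1
    rwa [hz] at this
  have hDb : ∀ x : E, ‖fderiv ℝ (fun z : E => p (z, 0)) x‖ ≤ Cp * ‖x‖ ^ (N - 1) ∧
      fderiv ℝ (fun z : E => p (z, 0)) x x = (N : ℝ) • p (x, 0) := by
    intro x
    obtain ⟨-, D, hD, hDn, hDx⟩ := hpx (x, 0)
    have h1 : HasFDerivAt (fun z : E => p (z, 0)) (D.comp (ContinuousLinearMap.inl ℝ E F)) x :=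
      HasFDerivAt.comp (f := fun z : E => ((z, 0) : E × F)) x hD
        (ContinuousLinearMap.inl ℝ E F).hasFDerivAt
    rw [h1.fderiv]
    refine ⟨?_, by simpa using hDx⟩
    refine ContinuousLinearMap.opNorm_le_bound _ (by positivity) fun y => ?_
    have h2 := D.le_opNorm (y, 0)
    rw [hz] at h2 hDn
    simp only [ContinuousLinearMap.comp_apply, ContinuousLinearMap.inl_apply]
    exact h2.trans (mul_le_mul_of_nonneg_right hDn (norm_nonneg _))
  have hDq : ∀ x : E, ‖fderiv ℝ (fun y : F => q (x, y)) 0‖ ≤ Cq * ‖x‖ ^ (M - 1) := by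
    intro x
    obtain ⟨-, D, hD, hDn, -⟩ := hqx (x, 0)
    have h1 : HasFDerivAt (fun y : F => q (x, y)) (D.comp (ContinuousLinearMap.inr ℝ E F)) 0 :=
      HasFDerivAt.comp (f := fun y : F => ((x, y) : E × F)) 0 hD
        (hasFDerivAt_prodMk_right x 0)
    rw [h1.fderiv]
    refine ContinuousLinearMap.opNorm_le_bound _ (by positivity) fun y => ?_
    have h2 := D.le_opNorm (0, y)
    have h3 : ‖((0, y) : E × F)‖ = ‖y‖ := by simp [Prod.norm_def]
    rw [h3] at h2
    rw [hz] at hDn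
    simp only [ContinuousLinearMap.comp_apply, ContinuousLinearMap.inr_apply]
    exact h2.trans (mul_le_mul_of_nonneg_right hDn (norm_nonneg _))
  set D : E → E →L[ℝ] E := fun x => fderiv ℝ (fun z : E => p (z, 0)) x with hDdef
  set Q : E → F →L[ℝ] F := fun x => fderiv ℝ (fun y : F => q (x, y)) 0 with hQdef
  have bd1 : BddAbove ((fun x : E => (‖x + p (x, 0)‖ - ‖x‖) / ‖x‖ ^ N) '' Vrho V ρ) := by
    refine ⟨Cp, ?_⟩
    rintro _ ⟨x, hx, rfl⟩
    have := hpos _ _ hx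
    simp only
    rw [div_le_iff₀ (by positivity)]
    linarith [norm_add_le x (p (x, 0)), hb x]
  have bd2 : BddAbove ((fun x : E => ‖p (x, 0)‖ / ‖x‖ ^ N) '' Vrho V ρ) := by
    refine ⟨Cp, ?_⟩
    rintro _ ⟨x, hx, rfl⟩
    have := hpos _ _ hx
    simp only
    rw [div_le_iff₀ (by positivity)]
    exact hb x
  have bd3 : BddAbove ((fun x : E =>
      (‖ContinuousLinearMap.id ℝ E + D x‖ - 1) / ‖x‖ ^ (N - 1)) '' Vrho V ρ) := by
    refine ⟨Cp, ?_⟩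
    rintro _ ⟨x, hx, rfl⟩
    have := hpos _ _ hx
    simp only
    rw [div_le_iff₀ (by positivity)]
    linarith [norm_add_le (ContinuousLinearMap.id ℝ E) (D x), (hDb x).1,
      ContinuousLinearMap.norm_id_le (𝕜 := ℝ) (E := E)]
  have bd4 : BddAbove ((fun x : E =>
      (‖ContinuousLinearMap.id ℝ E - D x‖ - 1) / ‖x‖ ^ (N - 1)) '' Vrho V ρ) := by
    refine ⟨Cp, ?_⟩
    rintro _ ⟨x, hx, rfl⟩
    have := hpos _ _ hx
    simp only
    rw [div_le_iff₀ (by positivity)]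
    linarith [norm_sub_le (ContinuousLinearMap.id ℝ E) (D x), (hDb x).1,
      ContinuousLinearMap.norm_id_le (𝕜 := ℝ) (E := E)]
  have bd5 : BddAbove ((fun x : E =>
      (‖ContinuousLinearMap.id ℝ F - Q x‖ - 1) / ‖x‖ ^ (M - 1)) '' Vrho V ρ) := by
    refine ⟨Cq, ?_⟩
    rintro _ ⟨x, hx, rfl⟩
    have := hpos _ _ hx
    simp only
    rw [div_le_iff₀ (by positivity)]
    linarith [norm_sub_le (ContinuousLinearMap.id ℝ F) (Q x), hDq x,
      ContinuousLinearMap.norm_id_le (𝕜 := ℝ) (E := F)]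
  have hN0 : (0 : ℝ) < N := by exact_mod_cast (by omega : 0 < N)
  have hpw : ∀ x : E, ‖x‖ ^ N = ‖x‖ ^ (N - 1) * ‖x‖ := fun x => by
    rw [← pow_succ]; congr 1; omega
  -- pointwise bounds by the constants
  have ka : ∀ x ∈ Vrho V ρ, (‖x + p (x, 0)‖ - ‖x‖) / ‖x‖ ^ N ≤ -apC p V ρ N := fun x hx => by
    rw [apC, neg_neg]; exact le_csSup bd1 ⟨x, hx, rfl⟩
  have kb : ∀ x ∈ Vrho V ρ, ‖p (x, 0)‖ / ‖x‖ ^ N ≤ bpC p V ρ N := fun x hx =>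
    le_csSup bd2 ⟨x, hx, rfl⟩
  have kA : ∀ x ∈ Vrho V ρ, (‖ContinuousLinearMap.id ℝ E + D x‖ - 1) / ‖x‖ ^ (N - 1)
      ≤ -ApC p V ρ N := fun x hx => by
    rw [ApC, neg_neg]; exact le_csSup bd3 ⟨x, hx, rfl⟩
  have kB : ∀ x ∈ Vrho V ρ, (‖ContinuousLinearMap.id ℝ E - D x‖ - 1) / ‖x‖ ^ (N - 1)
      ≤ BpC p V ρ N := fun x hx => le_csSup bd4 ⟨x, hx, rfl⟩
  obtain ⟨x₀, hx₀⟩ := hne ρ hρ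
  have hx₀p := hpos _ _ hx₀
  have key : (N : ℝ) * apC p V ρ N ≤ BpC p V ρ N := by
    have h1 := ka x₀ hx₀
    have h2 := kB x₀ hx₀
    rw [div_le_iff₀ (by positivity)] at h1 h2
    have h3 := (ContinuousLinearMap.id ℝ E - D x₀).le_opNorm x₀
    have h4 : (ContinuousLinearMap.id ℝ E - D x₀) x₀ = x₀ - (N : ℝ) • p (x₀, 0) := by
      simp
      exact (hDb x₀).2
    rw [h4] at h3
    have h5 : ((N : ℝ) + 1) * ‖x₀‖ ≤ ‖x₀ - (N : ℝ) • p (x₀, 0)‖ + N * ‖x₀ + p (x₀, 0)‖ := by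
      have h6 := norm_add_le (x₀ - (N : ℝ) • p (x₀, 0)) ((N : ℝ) • (x₀ + p (x₀, 0)))
      have h7 : x₀ - (N : ℝ) • p (x₀, 0) + (N : ℝ) • (x₀ + p (x₀, 0)) = ((N : ℝ) + 1) • x₀ := by
        module
      rw [h7, norm_smul, norm_smul, Real.norm_of_nonneg (by positivity),
        Real.norm_of_nonneg (by positivity)] at h6
      exact h6
    have h8 := mul_le_mul_of_nonneg_right h2 hx₀p.le
    have h9 := mul_le_mul_of_nonneg_left h1 hN0.le
    have h10 : (N : ℝ) * apC p V ρ N * ‖x₀‖ ^ N ≤ BpC p V ρ N * ‖x₀‖ ^ N := by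
      have e : BpC p V ρ N * ‖x₀‖ ^ N = BpC p V ρ N * ‖x₀‖ ^ (N - 1) * ‖x₀‖ := by
        rw [hpw]; ring
      rw [e]
      linarith
    exact le_of_mul_le_mul_right h10 (by positivity)
  refine ⟨⟨hne ρ hρ, bd1, bd2, bd3, bd4, bd5⟩, ?_, ?_, ?_, key, fun h => ⟨by positivity, key⟩, ?_⟩
  · rw [abs_le]
    constructor
    · have : -apC p V ρ N ≤ bpC p V ρ N := by
        rw [apC, neg_neg]
        refine csSup_le ((hne ρ hρ).image _) ?_
        rintro _ ⟨x, hx, rfl⟩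
        have := hpos _ _ hx
        refine le_trans ?_ (kb x hx)
        simp only
        gcongr
        linarith [norm_add_le x (p (x, 0))]
      linarith
    · have h1 := ka x₀ hx₀
      have h2 := kb x₀ hx₀
      have h3 : -(‖p (x₀, 0)‖ / ‖x₀‖ ^ N) ≤ (‖x₀ + p (x₀, 0)‖ - ‖x₀‖) / ‖x₀‖ ^ N := by
        rw [← neg_div]
        gcongr
        have := norm_sub_le (x₀ + p (x₀, 0)) (p (x₀, 0))
        rw [add_sub_cancel_right] at this
        linarith
      linarith
  · have h1 := kA x₀ hx₀
    have h2 := kB x₀ hx₀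
    have h3 : 0 ≤ (‖ContinuousLinearMap.id ℝ E + D x₀‖ - 1) / ‖x₀‖ ^ (N - 1) +
        (‖ContinuousLinearMap.id ℝ E - D x₀‖ - 1) / ‖x₀‖ ^ (N - 1) := by
      rw [← add_div]
      refine div_nonneg ?_ (by positivity)
      have h4 := (ContinuousLinearMap.id ℝ E + D x₀).le_opNorm x₀
      have h5 := (ContinuousLinearMap.id ℝ E - D x₀).le_opNorm x₀
      have h6 := norm_add_le ((ContinuousLinearMap.id ℝ E + D x₀) x₀)
        ((ContinuousLinearMap.id ℝ E - D x₀) x₀)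
      have h7 : (ContinuousLinearMap.id ℝ E + D x₀) x₀ + (ContinuousLinearMap.id ℝ E - D x₀) x₀
          = (2 : ℝ) • x₀ := by
        rw [add_apply, sub_apply, ContinuousLinearMap.id_apply]
        module
      rw [h7, norm_smul, Real.norm_of_nonneg (by positivity)] at h6
      have h8 : 2 * ‖x₀‖ ≤ (‖ContinuousLinearMap.id ℝ E + D x₀‖ +
        ‖ContinuousLinearMap.id ℝ E - D x₀‖) * ‖x₀‖ := by linarith
      linarith [le_of_mul_le_mul_right h8 hx₀p]
    linarith
  · have : -apC p V ρ N ≤ -ApC p V ρ N / N := by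
      rw [apC, neg_neg]
      refine csSup_le ((hne ρ hρ).image _) ?_
      rintro _ ⟨x, hx, rfl⟩
      have hxp := hpos _ _ hx
      have h1 := kA x hx
      simp only
      rw [div_le_iff₀ (by positivity)] at h1 ⊢
      rw [div_mul_eq_mul_div, le_div_iff₀ hN0]
      have h3 := (ContinuousLinearMap.id ℝ E + D x).le_opNorm x
      have h4 : (ContinuousLinearMap.id ℝ E + D x) x = x + (N : ℝ) • p (x, 0) := by
        simp
        exact (hDb x).2
      rw [h4] at h3
      have h6 := norm_add_le (((N : ℝ) - 1) • x) (x + (N : ℝ) • p (x, 0))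
      have h7 : ((N : ℝ) - 1) • x + (x + (N : ℝ) • p (x, 0)) = (N : ℝ) • (x + p (x, 0)) := by
        module
      have hN1 : (0 : ℝ) ≤ (N : ℝ) - 1 := by
        have : (1 : ℝ) ≤ N := by exact_mod_cast (by omega : 1 ≤ N)
        linarith
      rw [h7, norm_smul, norm_smul, Real.norm_of_nonneg hN0.le, Real.norm_of_nonneg hN1] at h6
      have h8 := mul_le_mul_of_nonneg_right h1 hxp.le
      have e : -ApC p V ρ N * ‖x‖ ^ N = -ApC p V ρ N * ‖x‖ ^ (N - 1) * ‖x‖ := by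
        rw [hpw]; ring
      rw [e]
      linarith
    rw [neg_div] at this
    linarith
  · intro ρ' hρ' hle
    have hs := hsub ρ' hle
    have hn := hne ρ' hρ'
    refine ⟨neg_le_neg (csSup_le_csSup bd3 (hn.image _) (Set.image_mono hs)),
      csSup_le_csSup bd4 (hn.image _) (Set.image_mono hs),
      neg_le_neg (csSup_le_csSup bd5 (hn.image _) (Set.image_mono hs)),
      neg_le_neg (csSup_le_csSup bd1 (hn.image _) (Set.image_mono hs)),
      le_antisymm (csSup_le_csSup bd2 (hn.image _) (Set.image_mono hs)) ?_⟩
    refine csSup_le ((hne ρ hρ).image _) ?_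
    rintro _ ⟨x, hx, rfl⟩
    have hxp := hpos _ _ hx
    set t : ℝ := ρ' / (2 * ρ) with ht
    have ht0 : 0 < t := by positivity
    have ht1 : t < 1 := by rw [ht, div_lt_one (by positivity)]; linarith
    have hxρ : ‖x‖ < ρ := by simpa using hx.2
    refine le_csSup (bd2.mono (Set.image_mono hs)) ⟨t • x, ⟨hst x hx.1 t ⟨ht0, ht1⟩, ?_⟩, ?_⟩
    · rw [mem_ball_zero_iff, norm_smul, Real.norm_of_nonneg ht0.le]
      have h1 : t * ‖x‖ < t * ρ := mul_lt_mul_of_pos_left hxρ ht0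
      have h2 : t * ρ = ρ' / 2 := by rw [ht]; field_simp
      linarith
    · have h1 := hhom t (x, 0)
      rw [Prod.smul_mk, smul_zero] at h1
      simp only
      rw [h1, norm_smul, norm_smul, norm_pow, Real.norm_of_nonneg ht0.le, mul_pow]
      exact mul_div_mul_left _ _ (by positivity)
end
end

section
/- Let a, b > 0, let φ be the flow of the system ẋ₁ = −x₁², ẋ₂ = −a x₁ x₂, ẏ = b x₁ y + x₂³ on ℝ² × ℝ, and let F(x,y) = φ(1; x, y) be its time-1 map. Then: (i) there exists an open set V ⊆ ℝ², star-shaped with respect to the origin (one may take any open V contained in W = {(x₁,x₂) : |x₂| < (1−a)x₁ < 2/(a+1)} when a < 1), such that F satisfies hypotheses H1 and H2 on V for suitable ρ > 0 and norms; (ii) for x₁ > 0 one has the explicit iteration formulas F_x^n(x₁,x₂) = (x₁/(1+n x₁), x₂/(1+n x₁)^a) and F_y^n(x,y) = (1+n x₁)^b [y + x₂³ ∫₀^n (1+s x₁)^{−(b+3a)} ds]; (iii) if b + 3a ≤ 1, then for every (x₁, x₂) with x₁ > 0 and x₂ ≠ 0 and every y ∈ ℝ, the orbit F^n(x₁, x₂,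 y) does not converge to 0 as n → ∞ (since (1+n x₁)^b → ∞ and the integral ∫₀^∞ (1+s x₁)^{−(b+3a)} ds diverges, no choice of y makes F_y^n(x,y) → 0); consequently F has no stable invariant manifold of the origin over V. -/
open Metric Set Filter Asymptotics Topology

noncomputable section

/-- A solution of a scalar linear homogeneous ODE starting at zero vanishes. -/
lemma toy_lin_zero (u c : ℝ → ℝ) (hc : ContinuousOn c (Set.Ici 0)) (h0 : u 0 = 0)
    (hu : ∀ t : ℝ, 0 ≤ t → HasDerivAt u (c t * u t) t) : ∀ t : ℝ, 0 ≤ t → u t = 0 := by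
  intro T hT
  obtain ⟨K, hK⟩ := (isCompact_Icc (a := (0:ℝ)) (b := T)).exists_bound_of_continuousOn
    (hc.mono (fun x hx => hx.1))
  have := norm_le_gronwallBound_of_norm_deriv_right_le (f := u) (f' := fun t => c t * u t)
    (δ := 0) (K := K) (ε := 0) (a := 0) (b := T)
    (fun t ht => (hu t ht.1).continuousAt.continuousWithinAt)
    (fun t ht => (hu t ht.1).hasDerivWithinAt) (by simp [h0])
    (fun t ht => by
      rw [norm_mul, add_zero]
      exact mul_le_mul_of_nonneg_right (hK t ⟨ht.1, ht.2.le⟩) (norm_nonneg _))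
    T ⟨hT, le_rfl⟩
  simpa [gronwallBound_ε0] using this

/-- The explicit solution of the toy system. -/
lemma toy_explicit (a b : ℝ) (γ : ℝ → (ℝ × ℝ) × ℝ)
    (x₁ x₂ y : ℝ) (hx : 0 < x₁) (h0 : γ 0 = ((x₁, x₂), y))
    (hγ : ∀ t : ℝ, 0 ≤ t →
      HasDerivAt γ ((-(γ t).1.1 ^ 2, -a * (γ t).1.1 * (γ t).1.2),
          b * (γ t).1.1 * (γ t).2 + (γ t).1.2 ^ 3) t) :
    ∀ t : ℝ, 0 ≤ t → γ t = ((x₁ / (1 + t * x₁), x₂ / (1 + t * x₁) ^ (a : ℝ)),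
      (1 + t * x₁) ^ (b : ℝ) *
          (y + x₂ ^ 3 * ∫ s in (0 : ℝ)..t, (1 + s * x₁) ^ (-(b + 3 * a)))) := by
  have d1 : ∀ t : ℝ, 0 ≤ t → HasDerivAt (fun s => (γ s).1.1) (-(γ t).1.1 ^ 2) t :=
    fun t ht => (ContinuousLinearMap.fst ℝ ℝ ℝ).hasFDerivAt.comp_hasDerivAt t
      ((ContinuousLinearMap.fst ℝ (ℝ × ℝ) ℝ).hasFDerivAt.comp_hasDerivAt t (hγ t ht))
  have d2 : ∀ t : ℝ, 0 ≤ t →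
      HasDerivAt (fun s => (γ s).1.2) (-a * (γ t).1.1 * (γ t).1.2) t :=
    fun t ht => (ContinuousLinearMap.snd ℝ ℝ ℝ).hasFDerivAt.comp_hasDerivAt t
      ((ContinuousLinearMap.fst ℝ (ℝ × ℝ) ℝ).hasFDerivAt.comp_hasDerivAt t (hγ t ht))
  have d3 : ∀ t : ℝ, 0 ≤ t →
      HasDerivAt (fun s => (γ s).2) (b * (γ t).1.1 * (γ t).2 + (γ t).1.2 ^ 3) t :=
    fun t ht => (ContinuousLinearMap.snd ℝ (ℝ × ℝ) ℝ).hasFDerivAt.comp_hasDerivAt t (hγ t ht)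
  have c1 : ContinuousOn (fun s => (γ s).1.1) (Set.Ici 0) :=
    fun t ht => (d1 t ht).continuousAt.continuousWithinAt
  have hpos : ∀ t : ℝ, 0 ≤ t → 0 < 1 + t * x₁ := fun t ht => by positivity
  have dl : ∀ t : ℝ, HasDerivAt (fun s : ℝ => 1 + s * x₁) x₁ t := fun t => by
    simpa using ((hasDerivAt_id t).mul_const x₁).const_add 1
  have e1 : ∀ t : ℝ, 0 ≤ t → (γ t).1.1 = x₁ / (1 + t * x₁) := by
    intro t ht
    have := toy_lin_zero (fun s => (γ s).1.1 * (1 + s * x₁) - x₁) (fun s => -(γ s).1.1)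
      c1.neg (by simp [h0])
      (fun s hs => by
        refine (((d1 s hs).mul (dl s)).sub_const x₁).congr_deriv ?_
        ring) t ht
    have h := hpos t ht
    field_simp
    linarith
  have dp : ∀ (c t : ℝ), 0 ≤ t → HasDerivAt (fun s : ℝ => (1 + s * x₁) ^ c)
      (c * (x₁ / (1 + t * x₁)) * (1 + t * x₁) ^ c) t := by
    intro c t ht
    have h := hpos t ht
    refine ((dl t).rpow_const (p := c) (Or.inl h.ne')).congr_deriv ?_
    rw [Real.rpow_sub_one h.ne']
    field_simp
  have e2 : ∀ t : ℝ, 0 ≤ t → (γ t).1.2 = x₂ * (1 + t * x₁) ^ (-a) := by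
    intro t ht
    have := toy_lin_zero (fun s => (γ s).1.2 - x₂ * (1 + s * x₁) ^ (-a))
      (fun s => -a * (γ s).1.1)
      (continuousOn_const.mul c1) (by simp [h0])
      (fun s hs => by
        refine ((d2 s hs).sub ((dp (-a) s hs).const_mul x₂)).congr_deriv ?_
        rw [e1 s hs]
        ring) t ht
    linarith
  have dI : ∀ t : ℝ, 0 ≤ t → HasDerivAt
      (fun t : ℝ => ∫ s in (0 : ℝ)..t, (1 + s * x₁) ^ (-(b + 3 * a)))
      ((1 + t * x₁) ^ (-(b + 3 * a))) t := by
    intro t ht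
    refine intervalIntegral.integral_hasDerivAt_right ?_ ?_ ?_
    · apply ContinuousOn.intervalIntegrable
      intro s hs
      rw [Set.uIcc_of_le ht] at hs
      exact (dp _ s hs.1).continuousAt.continuousWithinAt
    · have : Measurable (fun s : ℝ => (1 + s * x₁) ^ (-(b + 3 * a))) := by fun_prop
      exact this.stronglyMeasurable.stronglyMeasurableAtFilter
    · exact (dp _ t ht).continuousAt
  have e3 : ∀ t : ℝ, 0 ≤ t → (γ t).2 = (1 + t * x₁) ^ (b : ℝ) *
          (y + x₂ ^ 3 * ∫ s in (0 : ℝ)..t, (1 + s * x₁) ^ (-(b + 3 * a))) := by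
    intro t ht
    have := toy_lin_zero (fun t => (γ t).2 - (1 + t * x₁) ^ (b : ℝ) *
          (y + x₂ ^ 3 * ∫ s in (0 : ℝ)..t, (1 + s * x₁) ^ (-(b + 3 * a))))
      (fun s => b * (γ s).1.1)
      (continuousOn_const.mul c1) (by simp [h0])
      (fun s hs => by
        refine ((d3 s hs).sub ((dp b s hs).mul
          (((dI s hs).const_mul (x₂ ^ 3)).const_add y))).congr_deriv ?_
        rw [e1 s hs, e2 s hs]
        have h := hpos s hs
        have k : (1 + s * x₁) ^ b * (1 + s * x₁) ^ (-(b + 3 * a)) =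
            ((1 + s * x₁) ^ (-a)) ^ 3 := by
          rw [← Real.rpow_add h, ← Real.rpow_natCast, ← Real.rpow_mul h.le]
          congr 1
          push_cast
          ring
        linear_combination (-x₂ ^ 3) * k) t ht
    linarith
  intro t ht
  refine Prod.ext (Prod.ext (e1 t ht) ?_) (e3 t ht)
  rw [e2 t ht, Real.rpow_neg (hpos t ht).le]
  rfl

/-- The integral in the iteration formula diverges when the exponent is at most one. -/
lemma toy_integral_tendsto (c x₁ : ℝ) (hx : 0 < x₁) (hc : c ≤ 1) :
    Tendsto (fun n : ℕ => ∫ s in (0 : ℝ)..(n : ℝ), (1 + s * x₁) ^ (-c)) atTop atTop := by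
  have hlow : ∀ n : ℕ, Real.log (1 + n * x₁) / x₁ ≤
      ∫ s in (0 : ℝ)..(n : ℝ), (1 + s * x₁) ^ (-c) := by
    intro n
    have hn : (0:ℝ) ≤ n := n.cast_nonneg
    have hpos : ∀ t : ℝ, 0 ≤ t → 0 < 1 + t * x₁ := fun t ht => by positivity
    have cinv : ContinuousOn (fun s : ℝ => (1 + s * x₁)⁻¹) (Set.uIcc 0 (n:ℝ)) := by
      refine ContinuousOn.inv₀ (by fun_prop) ?_
      intro s hs
      rw [Set.uIcc_of_le hn] at hs
      exact (hpos s hs.1).ne'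
    have cp : ContinuousOn (fun s : ℝ => (1 + s * x₁) ^ (-c)) (Set.uIcc 0 (n:ℝ)) := by
      refine ContinuousOn.rpow_const (by fun_prop) ?_
      intro s hs
      rw [Set.uIcc_of_le hn] at hs
      exact Or.inl (hpos s hs.1).ne'
    have hI : ∫ s in (0 : ℝ)..(n : ℝ), (1 + s * x₁)⁻¹ = Real.log (1 + n * x₁) / x₁ := by
      rw [intervalIntegral.integral_eq_sub_of_hasDerivAt
        (f := fun s => Real.log (1 + s * x₁) / x₁) _ cinv.intervalIntegrable]
      · simp
      · intro s hs
        rw [Set.uIcc_of_le hn] at hs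
        have h := hpos s hs.1
        have dl : HasDerivAt (fun s : ℝ => 1 + s * x₁) x₁ s := by
          simpa using ((hasDerivAt_id s).mul_const x₁).const_add 1
        refine ((dl.log h.ne').div_const x₁).congr_deriv ?_
        field_simp
    rw [← hI]
    refine intervalIntegral.integral_mono_on hn cinv.intervalIntegrable cp.intervalIntegrable ?_
    intro s hs
    rw [← Real.rpow_neg_one]
    refine Real.rpow_le_rpow_of_exponent_le ?_ (by linarith)
    have := mul_nonneg hs.1 hx.le
    linarith
  refine tendsto_atTop_mono hlow ?_
  refine Tendsto.atTop_div_const hx ?_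
  refine Real.tendsto_log_atTop.comp ?_
  refine tendsto_atTop_add_const_left _ _ ?_
  exact tendsto_natCast_atTop_atTop.atTop_mul_const hx

/-- Section 7.1, a toy model: a map satisfying H1 and H2 on a suitable
star-shaped domain, with explicit iteration formulas, which has no stable invariant
manifold at the origin when `b + 3a ≤ 1`. -/
theorem toy_model_no_stable_manifold
    (a b : ℝ) (ha : 0 < a) (hb : 0 < b)
    (φ : ℝ → (ℝ × ℝ) × ℝ → (ℝ × ℝ) × ℝ)
    -- φ is the flow of ẋ₁ = -x₁², ẋ₂ = -a x₁ x₂, ẏ = b x₁ y + x₂³ (forward in time,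
    -- on the half-space x₁ > 0)
    (hφ0 : ∀ z, φ 0 z = z)
    (hφ : ∀ z : (ℝ × ℝ) × ℝ, 0 < z.1.1 → ∀ t : ℝ, 0 ≤ t →
      HasDerivAt (fun s => φ s z)
        ((-(φ t z).1.1 ^ 2, -a * (φ t z).1.1 * (φ t z).1.2),
          b * (φ t z).1.1 * (φ t z).2 + (φ t z).1.2 ^ 3) t)
    (F : (ℝ × ℝ) × ℝ → (ℝ × ℝ) × ℝ) (hF : F = φ 1)
    (W : Set (ℝ × ℝ))
    (hW : W = {x : ℝ × ℝ | |x.2| < (1 - a) * x.1 ∧ (1 - a) * x.1 < 2 / (a + 1)}) :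
    -- (i) there is an open star-shaped V ⊆ W on which F satisfies H1 and H2
    (a < 1 → ∃ V : Set (ℝ × ℝ), IsOpen V ∧ StarShaped0 V ∧ V ⊆ W ∧
      ∃ ρ > (0 : ℝ),
        HypH1 (fun z : (ℝ × ℝ) × ℝ => (-z.1.1 ^ 2, -a * z.1.1 * z.1.2)) V ρ 2 ∧
        HypH2 (fun z : (ℝ × ℝ) × ℝ => (-z.1.1 ^ 2, -a * z.1.1 * z.1.2))
          (fun z : (ℝ × ℝ) × ℝ => b * z.1.1 * z.2) V ρ 2 2) ∧
    -- (ii) explicit iteration formulas for x₁ > 0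
    (∀ x₁ x₂ y : ℝ, 0 < x₁ → ∀ n : ℕ,
      (F^[n] ((x₁, x₂), y)).1 =
        (x₁ / (1 + n * x₁), x₂ / (1 + n * x₁) ^ (a : ℝ)) ∧
      (F^[n] ((x₁, x₂), y)).2 =
        (1 + n * x₁) ^ (b : ℝ) *
          (y + x₂ ^ 3 * ∫ s in (0 : ℝ)..(n : ℝ), (1 + s * x₁) ^ (-(b + 3 * a)))) ∧
    -- (iii) if b + 3a ≤ 1, no orbit with x₁ > 0, x₂ ≠ 0 converges to the origin, hence
    -- F has no stable invariant manifold of the origin over W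
    (b + 3 * a ≤ 1 →
      (∀ x₁ x₂ y : ℝ, 0 < x₁ → x₂ ≠ 0 →
        ¬ Tendsto (fun n => F^[n] ((x₁, x₂), y)) atTop (𝓝 0)) ∧
      {z : (ℝ × ℝ) × ℝ | (∀ k : ℕ, (F^[k] z).1 ∈ W) ∧
          Tendsto (fun k => F^[k] z) atTop (𝓝 0)} ⊆
        {z : (ℝ × ℝ) × ℝ | z.1.2 = 0}) := by
  have hform : ∀ x₁ x₂ y : ℝ, 0 < x₁ → ∀ n : ℕ, F^[n] ((x₁, x₂), y) =
      ((x₁ / (1 + n * x₁), x₂ / (1 + n * x₁) ^ (a : ℝ)),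
        (1 + n * x₁) ^ (b : ℝ) *
          (y + x₂ ^ 3 * ∫ s in (0 : ℝ)..(n : ℝ), (1 + s * x₁) ^ (-(b + 3 * a)))) := by
    intro x₁ x₂ y hx n
    have key := toy_explicit a b (fun s => φ s ((x₁, x₂), y)) x₁ x₂ y hx (hφ0 _)
      (hφ ((x₁, x₂), y) hx)
    rw [← key n n.cast_nonneg]
    induction n with
    | zero => simp [hφ0]
    | succ n ih =>
      rw [Function.iterate_succ_apply', ih, hF]
      have hpos : 0 < (φ n ((x₁, x₂), y)).1.1 := by
        have := key n n.cast_nonneg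
        rw [this]
        positivity
      have k1 := toy_explicit a b (fun s => φ s (φ n ((x₁, x₂), y))) _ _ _ hpos (hφ0 _)
        (hφ _ hpos) 1 zero_le_one
      have k2 := toy_explicit a b (fun s => φ (n + s) ((x₁, x₂), y))
        (φ n ((x₁, x₂), y)).1.1 (φ n ((x₁, x₂), y)).1.2 (φ n ((x₁, x₂), y)).2 hpos
        (by simp)
        (fun t ht => (hφ ((x₁, x₂), y) hx (n + t) (by positivity)).comp_const_add (n:ℝ) t)
        1 zero_le_one
      push_cast
      exact k1.trans k2.symm
  have hdiv : b + 3 * a ≤ 1 → ∀ x₁ x₂ y : ℝ, 0 < x₁ → x₂ ≠ 0 →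
        ¬ Tendsto (fun n => F^[n] ((x₁, x₂), y)) atTop (𝓝 0) := by
    intro hab x₁ x₂ y hx hx2 hT
    have hT2 : Tendsto (fun n => (F^[n] ((x₁, x₂), y)).2) atTop (𝓝 0) :=
      (continuous_snd.tendsto (0 : (ℝ × ℝ) × ℝ)).comp hT
    have hT3 : Tendsto (fun n : ℕ => y + x₂ ^ 3 *
        ∫ s in (0 : ℝ)..(n : ℝ), (1 + s * x₁) ^ (-(b + 3 * a))) atTop (𝓝 0) := by
      refine squeeze_zero_norm ?_ (by simpa only [norm_zero] using hT2.norm)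
      intro n
      rw [hform x₁ x₂ y hx n]
      rw [norm_mul]
      refine le_mul_of_one_le_left (norm_nonneg _) ?_
      refine le_trans ?_ (le_abs_self _)
      refine Real.one_le_rpow ?_ hb.le
      have : 0 ≤ (n:ℝ) * x₁ := by positivity
      linarith
    have hT4 : Tendsto (fun n : ℕ =>
        ∫ s in (0 : ℝ)..(n : ℝ), (1 + s * x₁) ^ (-(b + 3 * a))) atTop
        (𝓝 ((0 - y) / x₂ ^ 3)) := by
      refine ((hT3.sub_const y).div_const (x₂ ^ 3)).congr ?_
      intro n
      rw [div_eq_iff (pow_ne_zero 3 hx2)]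
      ring
    exact not_tendsto_nhds_of_tendsto_atTop (toy_integral_tendsto _ _ hx hab) _ hT4
  refine ⟨?_, fun x₁ x₂ y hx n => ?_, fun hab => ⟨hdiv hab, ?_⟩⟩
  · intro ha1
    have h1a : 0 < 1 - a := by linarith
    have hWpos : ∀ x ∈ W, 0 < x.1 := by
      intro x hx
      rw [hW] at hx
      exact pos_of_mul_pos_right (lt_of_le_of_lt (abs_nonneg _) hx.1) h1a.le
    have hstar : ∀ x ∈ W, ∀ t : ℝ, t ∈ Set.Ioo (0 : ℝ) 1 → t • x ∈ W := by
      intro x hx t ht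
      have hp := hWpos x hx
      rw [hW] at hx ⊢
      obtain ⟨h1, h2⟩ := hx
      simp only [Set.mem_ofPred_eq, Prod.smul_fst, Prod.smul_snd, smul_eq_mul, abs_mul,
        abs_of_pos ht.1]
      constructor
      · nlinarith [mul_lt_mul_of_pos_left h1 ht.1]
      · have : 0 < (1 - a) * x.1 := mul_pos h1a hp
        nlinarith [ht.2]
    have hWopen : IsOpen W := by
      rw [hW]
      have o1 : IsOpen {x : ℝ × ℝ | |x.2| < (1 - a) * x.1} :=
        isOpen_lt (by fun_prop) (by fun_prop)
      have o2 : IsOpen {x : ℝ × ℝ | (1 - a) * x.1 < 2 / (a + 1)} :=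
        isOpen_lt (by fun_prop) (by fun_prop)
      exact o1.inter o2
    have hpt : (((1 / (1 - a)) * (1 / (a + 1)), 0) : ℝ × ℝ) ∈ W := by
      rw [hW]
      have h3 : (1 - a) * ((1 / (1 - a)) * (1 / (a + 1))) = 1 / (a + 1) := by
        field_simp
      simp only [Set.mem_ofPred_eq, h3, abs_zero]
      exact ⟨by positivity, by gcongr; norm_num⟩
    -- the data on the small domain
    have hnorm : ∀ x ∈ W, ‖x‖ = x.1 := by
      intro x hx
      have hp := hWpos x hx
      rw [hW] at hx
      rw [Prod.norm_def, Real.norm_eq_abs, Real.norm_eq_abs, abs_of_pos hp]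
      exact max_eq_left (by nlinarith [hx.1])
    have hρ : 0 < min a (1 / b) := lt_min ha (by positivity)
    have hmem : ∀ x ∈ Vrho W (min a (1 / b)), x ∈ W ∧ 0 < x.1 ∧ x.1 < a ∧ b * x.1 < 1 := by
      intro x hx
      have h := hx.2
      rw [mem_ball_zero_iff, hnorm x hx.1] at h
      refine ⟨hx.1, hWpos x hx.1, h.trans_le (min_le_left _ _), ?_⟩
      have := h.trans_le (min_le_right _ _)
      rwa [lt_div_iff₀ hb, mul_comm] at this
    have hne : (Vrho W (min a (1 / b))).Nonempty := by
      have ht : Tendsto (fun t : ℝ => t • (((1 / (1 - a)) * (1 / (a + 1)), 0) : ℝ × ℝ))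
          (𝓝[>] 0) (𝓝 0) := by
        have : Continuous (fun t : ℝ => t • (((1 / (1 - a)) * (1 / (a + 1)), 0) : ℝ × ℝ)) := by
          fun_prop
        simpa using (this.tendsto 0).mono_left nhdsWithin_le_nhds
      obtain ⟨t, h1, h2⟩ := ((ht.eventually (ball_mem_nhds 0 hρ)).and
        (Ioo_mem_nhdsGT (zero_lt_one (α := ℝ)))).exists
      exact ⟨_, hstar _ hpt t h2, h1⟩
    have hap : 1 ≤ apC (fun z : (ℝ × ℝ) × ℝ => (-z.1.1 ^ 2, -a * z.1.1 * z.1.2)) W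
        (min a (1 / b)) 2 := by
      unfold apC
      rw [le_neg]
      refine csSup_le (hne.image _) ?_
      rintro _ ⟨x, hx, rfl⟩
      obtain ⟨hxW, hp, hxa, -⟩ := hmem x hx
      have h2 : |x.2| < (1 - a) * x.1 := by rw [hW] at hxW; exact hxW.1
      simp only [hnorm x hxW]
      rw [div_le_iff₀ (by positivity)]
      have : ‖x + (-x.1 ^ 2, -a * x.1 * x.2)‖ ≤ x.1 - x.1 ^ 2 := by
        rw [Prod.norm_def]
        refine max_le ?_ ?_
        · simp only [Prod.fst_add, Real.norm_eq_abs]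
          rw [abs_of_nonneg (by nlinarith)]
          linarith
        · simp only [Prod.snd_add, Real.norm_eq_abs]
          have e : x.2 + -a * x.1 * x.2 = (1 - a * x.1) * x.2 := by ring
          have h3 : 0 < 1 - a * x.1 := by nlinarith
          rw [e, abs_mul, abs_of_pos h3]
          have h4 : 0 < a * x.1 := by positivity
          nlinarith [abs_nonneg x.2]
      linarith
    have hBq : b ≤ BqC (fun z : (ℝ × ℝ) × ℝ => b * z.1.1 * z.2) W (min a (1 / b)) 2 := by
      unfold BqC
      rw [le_neg]
      refine csSup_le (hne.image _) ?_
      rintro _ ⟨x, hx, rfl⟩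
      obtain ⟨hxW, hp, hxa, hxb⟩ := hmem x hx
      simp only [hnorm x hxW]
      have hfd : fderiv ℝ (fun y : ℝ => b * x.1 * y) 0 =
          (b * x.1) • ContinuousLinearMap.id ℝ ℝ := by
        have := ((hasFDerivAt_id (𝕜 := ℝ) (0:ℝ)).const_mul (b * x.1)).fderiv
        simpa using this
      have e : ContinuousLinearMap.id ℝ ℝ - (b * x.1) • ContinuousLinearMap.id ℝ ℝ =
          (1 - b * x.1) • ContinuousLinearMap.id ℝ ℝ := by
        ext
        simp
      rw [hfd, e, norm_smul, ContinuousLinearMap.norm_id, Real.norm_eq_abs,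
        abs_of_pos (by linarith), div_le_iff₀ (by positivity)]
      norm_num
    refine ⟨W, hWopen, ⟨?_, hstar⟩, subset_rfl, min a (1 / b), hρ, ?_, ?_, ?_, ?_⟩
    · rw [hWopen.frontier_eq]
      refine ⟨?_, fun h => lt_irrefl _ (hWpos 0 h)⟩
      have ht : Tendsto (fun t : ℝ => t • (((1 / (1 - a)) * (1 / (a + 1)), 0) : ℝ × ℝ))
          (𝓝[>] 0) (𝓝 0) := by
        have : Continuous (fun t : ℝ => t • (((1 / (1 - a)) * (1 / (a + 1)), 0) : ℝ × ℝ)) := by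
          fun_prop
        simpa using (this.tendsto 0).mono_left nhdsWithin_le_nhds
      refine mem_closure_of_tendsto ht ?_
      filter_upwards [Ioo_mem_nhdsGT (zero_lt_one (α := ℝ))] with t h2
      exact hstar _ hpt t h2
    · exact lt_of_lt_of_le one_pos hap
    · intro x _
      simp
    · intro h
      exact absurd h (lt_irrefl _)
    · intro _
      push_cast
      linarith
  · rw [hform x₁ x₂ y hx n]
    exact ⟨rfl, rfl⟩
  · rintro ⟨⟨x₁, x₂⟩, y⟩ ⟨h1, h2⟩
    have h := h1 0
    rw [hW] at h
    have h1a : 0 < 1 - a := by linarith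
    have hx : 0 < x₁ :=
      pos_of_mul_pos_right (lt_of_le_of_lt (abs_nonneg _) h.1) h1a.le
    by_contra hne
    exact hdiv hab x₁ x₂ y hx hne h2
end
end

section
/- Under the hypotheses of the a posteriori theorem (C^r map F in parabolic form with H1, H2, H3 and approximate solutions K^≤, R), let P be the Taylor polynomial of F at 0 of degree ℓ−1, let S_δ(x,y) = (x, δy) and set P̃ = S_δ^{-1}∘P∘S_δ, K̃^≤ = S_δ^{-1}∘K^≤. Then for any B > B_p there exist ρ, δ > 0 small enough such that ‖(DP̃)^{-1}(K̃^≤(x))‖ ≤ 1 + B‖x‖^{N−1} for all x ∈ V_ρ, where ℝ^{n+m} carries the norm ‖(x,y)‖ = max{‖x‖, ‖y‖}. -/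
open Metric Set Filter Asymptotics Topology

noncomputable section

section Scaling

/-- The Taylor polynomial of degree `d` of `f` at the origin. -/
def taylorPoly0 {G G' : Type*} [NormedAddCommGroup G] [NormedSpace ℝ G]
    [NormedAddCommGroup G'] [NormedSpace ℝ G'] (f : G → G') (d : ℕ) (z : G) : G' :=
  ∑ j ∈ Finset.range (d + 1), ((j.factorial : ℝ))⁻¹ • iteratedFDeriv ℝ j f 0 fun _ => z

/-- The scaling `S_δ(x, y) = (x, δ y)`. -/
def scaleY {E F : Type*} [NormedAddCommGroup E] [NormedSpace ℝ E]
    [NormedAddCommGroup F] [NormedSpace ℝ F] (δ : ℝ) (z : E × F) : E × F :=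
  (z.1, δ • z.2)

end Scaling


section Aux

set_option linter.unusedSectionVars false

variable {X Y Z : Type*} [NormedAddCommGroup X] [NormedSpace ℝ X]
  [NormedAddCommGroup Y] [NormedSpace ℝ Y] [NormedAddCommGroup Z] [NormedSpace ℝ Z]

lemma taylor_bigO [CompleteSpace Y] {f : X → Y} {n : ℕ}
    (hf : ContDiffAt ℝ ((n + 1 : ℕ) : ℕ∞) f 0) :
    (fun z => f z - taylorPoly0 f n z) =O[𝓝 0] (fun z => ‖z‖ ^ (n + 1)) := by
  have hf' : ContDiffAt ℝ (n + 1) f 0 := by exact_mod_cast hf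
  have h1 : ∀ᶠ z in 𝓝 (0 : X), ContDiffAt ℝ (n + 1) f z := by
    apply hf'.eventually
    exact_mod_cast ENat.natCast_ne_top (n + 1)
  have h2 : ContinuousAt (iteratedFDeriv ℝ (n + 1) f) 0 :=
    (hf'.iteratedFDeriv_right (i := n + 1) (m := 0) (by simp)).continuousAt
  set C := ‖iteratedFDeriv ℝ (n + 1) f 0‖ + 1
  have h3 : ∀ᶠ z in 𝓝 (0 : X), ‖iteratedFDeriv ℝ (n + 1) f z‖ < C :=
    h2.norm.eventually (gt_mem_nhds (lt_add_one _))
  obtain ⟨ε, hε, hball⟩ := Metric.eventually_nhds_iff_ball.1 (h1.and h3)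
  refine IsBigO.of_bound ((n.factorial : ℝ)⁻¹ * C) ?_
  filter_upwards [Metric.ball_mem_nhds (0 : X) hε] with z hz
  have hseg : ∀ t ∈ Set.Icc (0 : ℝ) 1, (0 : X) + t • z ∈ ball (0 : X) ε := by
    intro t ht
    rw [mem_ball_zero_iff] at hz ⊢
    rw [zero_add, norm_smul, Real.norm_of_nonneg ht.1]
    nlinarith [ht.1, ht.2, norm_nonneg z]
  have key := map_add_eq_sum_add_integral_iteratedFDeriv (f := f) (x := 0) (y := z) (n := n)
    (fun t ht => (hball _ (hseg t ht)).1)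
  rw [zero_add] at key
  have : f z - taylorPoly0 f n z = (n.factorial : ℝ)⁻¹ •
      ∫ t in (0 : ℝ)..1, (1 - t) ^ n • iteratedFDeriv ℝ (n + 1) f (0 + t • z) (fun _ ↦ z) := by
    rw [key, taylorPoly0, add_sub_cancel_left]
  rw [this, norm_smul, Real.norm_of_nonneg (by positivity), mul_assoc]
  gcongr
  have hb := intervalIntegral.norm_integral_le_of_norm_le_const (a := (0 : ℝ)) (b := 1)
    (C := C * ‖z‖ ^ (n + 1))
    (f := fun t => (1 - t) ^ n • iteratedFDeriv ℝ (n + 1) f (0 + t • z) (fun _ ↦ z)) ?_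
  · simpa using hb
  · intro t ht
    rw [Set.uIoc_of_le zero_le_one] at ht
    have ht' : t ∈ Set.Icc (0 : ℝ) 1 := ⟨ht.1.le, ht.2⟩
    have hm := (iteratedFDeriv ℝ (n + 1) f (0 + t • z)).le_opNorm (fun _ => z)
    simp only [Finset.prod_const, Finset.card_univ, Fintype.card_fin] at hm
    have hlt := (hball _ (hseg t ht')).2.le
    rw [norm_smul, norm_pow, Real.norm_of_nonneg (by linarith [ht.2])]
    have hp : (1 - t) ^ n ≤ 1 := pow_le_one₀ (by linarith [ht.2]) (by linarith [ht.1])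
    calc _ ≤ 1 * ‖iteratedFDeriv ℝ (n + 1) f (0 + t • z) (fun _ ↦ z)‖ := by gcongr
      _ ≤ ‖iteratedFDeriv ℝ (n + 1) f (0 + t • z)‖ * ‖z‖ ^ (n + 1) := by rw [one_mul]; exact hm
      _ ≤ _ := by gcongr

lemma IsHomogPoly.contDiff {j : ℕ} {g : X → Y} (h : IsHomogPoly j g) {n : WithTop ℕ∞} :
    ContDiff ℝ n g := by
  obtain ⟨P, hP⟩ := h
  have : g = fun x => P fun _ => x := funext hP
  rw [this]
  exact P.contDiff.comp (contDiff_pi.2 fun _ => contDiff_id)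

lemma IsHomogPoly.differentiable {j : ℕ} {g : X → Y} (h : IsHomogPoly j g) :
    Differentiable ℝ g := (h.contDiff (n := 1)).differentiable (by simp)

lemma IsHomogPoly.norm_le {j : ℕ} {g : X → Y} (h : IsHomogPoly j g) :
    ∃ C : ℝ, 0 ≤ C ∧ ∀ z, ‖g z‖ ≤ C * ‖z‖ ^ j := by
  obtain ⟨P, hP⟩ := h
  refine ⟨‖P‖, norm_nonneg _, fun z => ?_⟩
  have := P.le_opNorm fun _ => z
  simpa [hP] using this

/-- The derivative of a homogeneous polynomial is a homogeneous polynomial. -/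
lemma IsHomogPoly.fderiv {j : ℕ} {g : X → Y} (h : IsHomogPoly (j + 1) g) :
    IsHomogPoly j (fderiv ℝ g) := by
  obtain ⟨P, hP⟩ := h
  have hg : g = fun x => P fun _ => x := funext hP
  refine ⟨∑ i, (P.curryMid i).flipMultilinear, fun x => ?_⟩
  have h1 : HasFDerivAt (fun x : X => fun _ : Fin (j + 1) => x)
      (ContinuousLinearMap.pi fun _ => ContinuousLinearMap.id ℝ X) x :=
    hasFDerivAt_pi.2 fun _ => hasFDerivAt_id x
  have h2 := (P.hasFDerivAt (fun _ => x)).comp x h1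
  have e : (P ∘ fun x : X => fun _ : Fin (j + 1) => x) = g := hg.symm
  rw [e] at h2
  rw [h2.fderiv]
  ext v
  simp only [ContinuousLinearMap.comp_apply, ContinuousMultilinearMap.linearDeriv_apply,
    sum_apply,
    ContinuousLinearMap.flipMultilinear_apply_apply, ContinuousMultilinearMap.curryMid_apply]
  refine Finset.sum_congr rfl fun i _ => ?_
  congr 1
  symm
  rw [Fin.insertNth_eq_iff]
  constructor
  · simp
  · ext k
    simp [Fin.removeNth]

lemma IsHomogPoly.comp_clm {j : ℕ} {g : X → Y} (h : IsHomogPoly j g) (L : Z →L[ℝ] X) :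
    IsHomogPoly j (fun z => g (L z)) := by
  obtain ⟨P, hP⟩ := h
  exact ⟨P.compContinuousLinearMap fun _ => L, fun z => by simp [hP]⟩

lemma IsHomogPoly.clm_comp {j : ℕ} {g : X → Y} (h : IsHomogPoly j g) (L : Y →L[ℝ] Z) :
    IsHomogPoly j (fun z => L (g z)) := by
  obtain ⟨P, hP⟩ := h
  exact ⟨L.compContinuousMultilinearMap P, fun z => by simp [hP]⟩

lemma IsHomogPoly.sub {j : ℕ} {g g' : X → Y} (h : IsHomogPoly j g) (h' : IsHomogPoly j g') :
    IsHomogPoly j (fun z => g z - g' z) := by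
  obtain ⟨P, hP⟩ := h
  obtain ⟨P', hP'⟩ := h'
  exact ⟨P - P', fun z => by simp [hP, hP']⟩

lemma isHomogPoly_zero {j : ℕ} : IsHomogPoly j (fun _ : X => (0 : Y)) :=
  ⟨0, fun z => by simp⟩

lemma isHomogPoly_clm (L : X →L[ℝ] Y) : IsHomogPoly 1 (fun z => L z) :=
  ⟨(ContinuousMultilinearMap.ofSubsingleton ℝ X Y (0 : Fin 1)) L, fun z => by simp⟩

lemma IsHomogPoly.lipschitz {j : ℕ} {h : X → Y} (hh : IsHomogPoly (j + 1) h) :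
    ∃ C : ℝ, 0 ≤ C ∧ ∀ R z w, ‖z‖ ≤ R → ‖w‖ ≤ R → ‖h z - h w‖ ≤ C * R ^ j * ‖z - w‖ := by
  obtain ⟨C, hC, hb⟩ := hh.fderiv.norm_le
  refine ⟨C, hC, fun R z w hz hw => ?_⟩
  refine (convex_closedBall (0 : X) R).norm_image_sub_le_of_norm_fderiv_le (𝕜 := ℝ)
    (fun x _ => hh.differentiable x) (fun x hx => ?_) (by simpa using hw) (by simpa using hz)
  refine (hb x).trans ?_
  have : ‖x‖ ≤ R := by simpa using hx
  gcongr

lemma bigO_pow_le {k l : ℕ} (h : k ≤ l) :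
    (fun z : X => ‖z‖ ^ l) =O[𝓝 0] (fun z : X => ‖z‖ ^ k) := by
  refine IsBigO.of_bound 1 ?_
  filter_upwards [Metric.ball_mem_nhds (0 : X) one_pos] with z hz
  rw [mem_ball_zero_iff] at hz
  rw [norm_pow, norm_pow, norm_norm, one_mul]
  exact pow_le_pow_of_le_one (norm_nonneg _) hz.le h

lemma IsHomogPoly.bigO {j : ℕ} {g : X → Y} (h : IsHomogPoly j g) :
    g =O[𝓝 0] (fun z : X => ‖z‖ ^ j) := by
  obtain ⟨C, hC, hb⟩ := h.norm_le
  refine IsBigO.of_bound C (Eventually.of_forall fun z => ?_)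
  simpa using hb z

lemma poly_vanish (D k : ℕ) (g : ℕ → X → Y) (hg : ∀ j, IsHomogPoly j (g j))
    (hO : (fun z => ∑ j ∈ Finset.range D, g j z) =O[𝓝 0] (fun z => ‖z‖ ^ k)) :
    ∀ j < k, j < D → ∀ z, g j z = 0 := by
  intro j
  induction j using Nat.strong_induction_on with
  | _ j ih =>
    intro hjk hjD
    obtain ⟨P, hP⟩ := hg j
    have key : (fun z => P fun _ => z) =O[𝓝 0] (fun z : X => ‖z‖ ^ (j + 1)) := by
      have e : (fun z => P fun _ => z) = fun z => (∑ i ∈ Finset.range D, g i z)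
          - ∑ i ∈ (Finset.range D).erase j, g i z := by
        ext z
        rw [← hP, ← Finset.sum_erase_add _ _ (Finset.mem_range.2 hjD)]
        abel
      rw [e]
      refine (hO.trans (bigO_pow_le hjk)).sub ?_
      refine IsBigO.fun_sum fun i hi => ?_
      rw [Finset.mem_erase, Finset.mem_range] at hi
      rcases lt_or_gt_of_ne hi.1 with h | h
      · have : g i = fun _ => 0 := funext (ih i h (h.trans hjk) hi.2)
        rw [this]
        exact isBigO_zero _ _
      · exact (hg i).bigO.trans (bigO_pow_le h)
    intro z
    rw [hP]
    exact key.continuousMultilinearMap_apply_eq_zero z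

lemma poly_fderiv_bound (D k : ℕ) (g : ℕ → X → Y) (hg : ∀ j, IsHomogPoly j (g j))
    (hO : (fun z => ∑ j ∈ Finset.range D, g j z) =O[𝓝 0] (fun z => ‖z‖ ^ (k + 1))) :
    ∃ C : ℝ, 0 ≤ C ∧ ∀ z, ‖z‖ ≤ 1 →
      ‖fderiv ℝ (fun z => ∑ j ∈ Finset.range D, g j z) z‖ ≤ C * ‖z‖ ^ k := by
  have hv := poly_vanish D (k + 1) g hg hO
  have hj : ∀ j ∈ Finset.range D, ∃ C : ℝ, 0 ≤ C ∧ ∀ z, ‖z‖ ≤ 1 →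
      ‖fderiv ℝ (g j) z‖ ≤ C * ‖z‖ ^ k := by
    intro j hjD
    rw [Finset.mem_range] at hjD
    by_cases h : j < k + 1
    · refine ⟨0, le_rfl, fun z _ => ?_⟩
      have : g j = fun _ => 0 := funext (hv j h hjD)
      rw [this]
      simp
    · obtain ⟨i, rfl⟩ : ∃ i, j = i + 1 := ⟨j - 1, by omega⟩
      obtain ⟨C, hC, hb⟩ := (hg (i + 1)).fderiv.norm_le
      refine ⟨C, hC, fun z hz => (hb z).trans ?_⟩
      have := pow_le_pow_of_le_one (norm_nonneg z) hz (show k ≤ i by omega)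
      gcongr
  choose! C hC hb using hj
  refine ⟨∑ j ∈ Finset.range D, C j, Finset.sum_nonneg hC, fun z hz => ?_⟩
  rw [fderiv_fun_sum fun j _ => (hg j).differentiable z, Finset.sum_mul]
  exact (norm_sum_le _ _).trans (Finset.sum_le_sum fun j hj => hb j hj z hz)

lemma taylorPoly0_differentiable (f : X → Z) (d : ℕ) : Differentiable ℝ (taylorPoly0 f d) := by
  unfold taylorPoly0
  refine Differentiable.fun_sum fun j _ => Differentiable.const_smul ?_ _
  exact IsHomogPoly.differentiable ⟨iteratedFDeriv ℝ j f 0, fun _ => rfl⟩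

lemma taylor_fderiv_bound (f : X → Z) (d k : ℕ) (hkd : k + 1 ≤ d) (ϖ : Z →L[ℝ] Y) (μ : X →L[ℝ] Y)
    (p : X → Y) (hp : IsHomogPoly k p)
    (hT : (fun z => f z - taylorPoly0 f d z) =O[𝓝 0] (fun z => ‖z‖ ^ (d + 1)))
    (hf : (fun z => ϖ (f z) - μ z - p z) =O[𝓝 0] (fun z => ‖z‖ ^ (k + 1))) :
    ∃ C : ℝ, 0 ≤ C ∧ ∀ z, ‖z‖ ≤ 1 →
      ‖ϖ.comp (fderiv ℝ (taylorPoly0 f d) z) - μ - fderiv ℝ p z‖ ≤ C * ‖z‖ ^ k := by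
  have hterm : ∀ j, IsHomogPoly j
      (fun z => ((j.factorial : ℝ))⁻¹ • iteratedFDeriv ℝ j f 0 fun _ => z) := fun j =>
    ⟨((j.factorial : ℝ))⁻¹ • iteratedFDeriv ℝ j f 0, fun z => by simp⟩
  let g : ℕ → X → Y := fun j z =>
    (ϖ (((j.factorial : ℝ))⁻¹ • iteratedFDeriv ℝ j f 0 fun _ => z)
      - (if j = 1 then μ z else 0)) - (if j = k then p z else 0)
  have hg : ∀ j, IsHomogPoly j (g j) := by
    intro j
    refine (((hterm j).clm_comp ϖ).sub ?_).sub ?_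
    · split_ifs with h
      · subst h; exact isHomogPoly_clm μ
      · exact isHomogPoly_zero
    · split_ifs with h
      · subst h; exact hp
      · exact isHomogPoly_zero
  have hsum : ∀ z, ∑ j ∈ Finset.range (d + 1), g j z = ϖ (taylorPoly0 f d z) - μ z - p z := by
    intro z
    simp only [g, Finset.sum_sub_distrib, taylorPoly0, map_sum]
    rw [Finset.sum_ite_eq', Finset.sum_ite_eq', if_pos (Finset.mem_range.2 (by omega)),
      if_pos (Finset.mem_range.2 (by omega))]
  have hsum' : (fun z => ∑ j ∈ Finset.range (d + 1), g j z)
      = fun z => ϖ (taylorPoly0 f d z) - μ z - p z := funext hsum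
  have hO : (fun z => ∑ j ∈ Finset.range (d + 1), g j z) =O[𝓝 0] (fun z => ‖z‖ ^ (k + 1)) := by
    rw [hsum']
    have h1 : (fun z => ϖ (f z - taylorPoly0 f d z)) =O[𝓝 0] (fun z : X => ‖z‖ ^ (k + 1)) :=
      ((ϖ.isBigO_comp _ _).trans hT).trans (bigO_pow_le (by omega))
    refine (hf.sub h1).congr_left fun z => ?_
    rw [map_sub]; abel
  obtain ⟨C, hC, hb⟩ := poly_fderiv_bound (d + 1) k g hg hO
  refine ⟨C, hC, fun z hz => ?_⟩
  have := hb z hz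
  rw [hsum'] at this
  have hd : HasFDerivAt (fun z => ϖ (taylorPoly0 f d z) - μ z - p z)
      (ϖ.comp (fderiv ℝ (taylorPoly0 f d) z) - μ - fderiv ℝ p z) z :=
    ((ϖ.hasFDerivAt.comp z (taylorPoly0_differentiable f d z).hasFDerivAt).sub μ.hasFDerivAt).sub
      (hp.differentiable z).hasFDerivAt
  rwa [hd.fderiv] at this

lemma row_est (f : X → Z) (d k : ℕ) (hk : 2 ≤ k) (hkd : k + 1 ≤ d) (ϖ : Z →L[ℝ] Y)
    (μ : X →L[ℝ] Y)
    (p : X → Y) (hp : IsHomogPoly k p)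
    (hT : (fun z => f z - taylorPoly0 f d z) =O[𝓝 0] (fun z => ‖z‖ ^ (d + 1)))
    (hf : (fun z => ϖ (f z) - μ z - p z) =O[𝓝 0] (fun z => ‖z‖ ^ (k + 1)))
    (K : ℝ) (hK : 0 ≤ K) :
    ∃ C : ℝ, 0 ≤ C ∧ ∃ ρ > (0 : ℝ), ∀ x z : X, ‖x‖ < ρ → ‖z - x‖ ≤ K * ‖x‖ ^ 2 →
      ‖ϖ.comp (fderiv ℝ (taylorPoly0 f d) z) - μ - fderiv ℝ p x‖ ≤ C * ‖x‖ ^ k := by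
  obtain ⟨C1, hC1, hb1⟩ := taylor_fderiv_bound f d k hkd ϖ μ p hp hT hf
  obtain ⟨i, rfl⟩ : ∃ i, k = i + 1 + 1 := ⟨k - 2, by omega⟩
  obtain ⟨C2, hC2, hb2⟩ := hp.fderiv.lipschitz
  refine ⟨C1 * (1 + K) ^ (i + 1 + 1) + C2 * (1 + K) ^ i * K, by positivity, (1 + K)⁻¹,
    by positivity, fun x z hx hz => ?_⟩
  set t := ‖x‖ with ht
  have ht0 : 0 ≤ t := norm_nonneg _
  have htK : (1 + K) * t ≤ 1 := by
    have : (1 + K) * t ≤ (1 + K) * (1 + K)⁻¹ := by gcongr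
    rwa [mul_inv_cancel₀ (by positivity)] at this
  have ht1 : t ≤ 1 := by nlinarith
  have hzR : ‖z‖ ≤ (1 + K) * t := by
    calc ‖z‖ = ‖x + (z - x)‖ := by congr 1; abel
      _ ≤ t + K * t ^ 2 := (norm_add_le _ _).trans (by gcongr)
      _ ≤ (1 + K) * t := by nlinarith [mul_nonneg hK ht0]
  have h1 := hb1 z (hzR.trans htK)
  have h2 := hb2 ((1 + K) * t) z x hzR (by nlinarith [mul_nonneg hK ht0])
  calc _ = ‖(ϖ.comp (fderiv ℝ (taylorPoly0 f d) z) - μ - fderiv ℝ p z)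
        + (fderiv ℝ p z - fderiv ℝ p x)‖ := by congr 1; abel
    _ ≤ C1 * ‖z‖ ^ (i + 1 + 1) + C2 * ((1 + K) * t) ^ i * ‖z - x‖ :=
        (norm_add_le _ _).trans (add_le_add h1 h2)
    _ ≤ C1 * ((1 + K) * t) ^ (i + 1 + 1) + C2 * ((1 + K) * t) ^ i * (K * t ^ 2) := by gcongr
    _ = _ := by simp only [mul_pow]; ring

lemma sSup_bound (S : Set X) (k : ℕ) (T : X → Y →L[ℝ] Y) (C : ℝ)
    (hT : ∀ x, ‖T x‖ ≤ C * ‖x‖ ^ k) {x : X} (hx : x ∈ S) (hx0 : x ≠ 0) :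
    ‖ContinuousLinearMap.id ℝ Y - T x‖ ≤ 1 +
      sSup ((fun x : X => (‖ContinuousLinearMap.id ℝ Y - T x‖ - 1) / ‖x‖ ^ k) '' S) * ‖x‖ ^ k := by
  have hb : BddAbove ((fun x : X => (‖ContinuousLinearMap.id ℝ Y - T x‖ - 1) / ‖x‖ ^ k) '' S) := by
    refine ⟨max C 0, ?_⟩
    rintro _ ⟨y, -, rfl⟩
    refine div_le_of_le_mul₀ (by positivity) (by positivity) ?_
    have h1 : ‖ContinuousLinearMap.id ℝ Y - T y‖ ≤ 1 + ‖T y‖ :=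
      (norm_sub_le _ _).trans (by gcongr; exact ContinuousLinearMap.norm_id_le)
    have h2 : C * ‖y‖ ^ k ≤ max C 0 * ‖y‖ ^ k := by gcongr; exact le_max_left _ _
    linarith [hT y]
  have h := le_csSup hb (Set.mem_image_of_mem _ hx)
  have hpos : 0 < ‖x‖ ^ k := by positivity
  rw [div_le_iff₀ hpos] at h
  linarith

lemma euler_identity {N : ℕ} {g : X → Y} (hg : IsHomogPoly N g) (x : X) :
    fderiv ℝ g x x = (N : ℝ) • g x := by
  have h1 : HasDerivAt (fun t : ℝ => t • x) x 1 := by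
    simpa using (hasDerivAt_id (1 : ℝ)).smul_const x
  have h2 : HasFDerivAt g (fderiv ℝ g x) ((1 : ℝ) • x) := by
    rw [one_smul]; exact (hg.differentiable x).hasFDerivAt
  have h3 : HasDerivAt (fun t : ℝ => g (t • x)) (fderiv ℝ g x x) 1 :=
    h2.comp_hasDerivAt (1 : ℝ) h1
  have h4 : HasDerivAt (fun t : ℝ => t ^ N • g x) ((N : ℝ) • g x) 1 := by
    simpa using (hasDerivAt_pow N (1 : ℝ)).smul_const (g x)
  have h5 : (fun t : ℝ => g (t • x)) = fun t => t ^ N • g x := by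
    obtain ⟨P, hP⟩ := hg
    ext t
    rw [hP, hP]
    simpa using P.map_smul_univ (fun _ => t) (fun _ => x)
  rw [h5] at h3
  exact h3.unique h4

lemma op_final [CompleteSpace X] [CompleteSpace Y] (A : X × Y →L[ℝ] X × Y)
    (P : X →L[ℝ] X) (Q : Y →L[ℝ] Y) (R1 : X × Y →L[ℝ] X) (R2 : X × Y →L[ℝ] Y)
    (h1 : (ContinuousLinearMap.fst ℝ X Y).comp A = P.comp (ContinuousLinearMap.fst ℝ X Y) + R1)
    (h2 : (ContinuousLinearMap.snd ℝ X Y).comp A = Q.comp (ContinuousLinearMap.snd ℝ X Y) + R2)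
    (a1 a2 a c : ℝ) (ha1 : ‖P‖ + ‖R1‖ ≤ a1) (ha2 : ‖Q‖ + ‖R2‖ ≤ a2) (h1a : a1 ≤ a) (h2a : a2 ≤ a)
    (ha : a ≤ 1 / 2)
    (hc1 : ‖ContinuousLinearMap.id ℝ X - P‖ + ‖R1‖ + 2 * a1 * a ≤ c)
    (hc2 : ‖ContinuousLinearMap.id ℝ Y - Q‖ + ‖R2‖ + 2 * a2 * a ≤ c) :
    IsUnit (1 + A) ∧ ‖(1 + A).inverse‖ ≤ c := by
  have hf : ‖ContinuousLinearMap.fst ℝ X Y‖ ≤ 1 := ContinuousLinearMap.norm_fst_le ..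
  have hs : ‖ContinuousLinearMap.snd ℝ X Y‖ ≤ 1 := ContinuousLinearMap.norm_snd_le ..
  have hP1 : ‖(ContinuousLinearMap.fst ℝ X Y).comp A‖ ≤ a1 := by
    rw [h1]
    refine (norm_add_le _ _).trans (le_trans ?_ ha1)
    gcongr
    exact (ContinuousLinearMap.opNorm_comp_le _ _).trans
      (mul_le_of_le_one_right (norm_nonneg _) hf)
  have hP2 : ‖(ContinuousLinearMap.snd ℝ X Y).comp A‖ ≤ a2 := by
    rw [h2]
    refine (norm_add_le _ _).trans (le_trans ?_ ha2)
    gcongr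
    exact (ContinuousLinearMap.opNorm_comp_le _ _).trans
      (mul_le_of_le_one_right (norm_nonneg _) hs)
  have ha1' : 0 ≤ a1 := (norm_nonneg _).trans hP1
  have ha2' : 0 ≤ a2 := (norm_nonneg _).trans hP2
  have ha0 : 0 ≤ a := ha1'.trans h1a
  have hA : ‖A‖ ≤ a := by
    refine ContinuousLinearMap.opNorm_le_bound _ ha0 fun w => ?_
    rw [Prod.norm_def]
    refine max_le ?_ ?_
    · exact (((ContinuousLinearMap.fst ℝ X Y).comp A).le_opNorm w).trans
        (by gcongr; exact hP1.trans h1a)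
    · exact (((ContinuousLinearMap.snd ℝ X Y).comp A).le_opNorm w).trans
        (by gcongr; exact hP2.trans h2a)
  have hU : IsUnit (1 + A) := by
    have := isUnit_one_sub_of_norm_lt_one (x := -A) (by rw [norm_neg]; linarith)
    rwa [sub_neg_eq_add] at this
  refine ⟨hU, ?_⟩
  obtain ⟨u, hu⟩ := hU
  set I := (1 + A).inverse with hI
  have hinv : (1 + A) * I = 1 := by
    rw [hI, ← hu, ← ContinuousLinearMap.ringInverse_eq_inverse, Ring.inverse_unit]
    exact u.mul_inv
  have hI1 : I = 1 - A * I := by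
    rw [add_mul, one_mul] at hinv
    exact eq_sub_of_add_eq hinv
  have hI2 : ‖I‖ ≤ 2 := by
    have : ‖I‖ ≤ 1 + ‖A‖ * ‖I‖ := by
      conv_lhs => rw [hI1]
      refine (norm_sub_le _ _).trans (add_le_add ContinuousLinearMap.norm_id_le (norm_mul_le _ _))
    nlinarith [norm_nonneg I]
  have hI3 : I = 1 - A + A * (A * I) := by
    conv_lhs => rw [hI1, hI1]
    rw [mul_sub, mul_one]; abel
  have hw : ∀ w, I w = w - A w + A (A (I w)) := fun w => by
    conv_lhs => rw [hI3]
    rfl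
  have hAI : ∀ w, ‖A (I w)‖ ≤ a * 2 * ‖w‖ := fun w =>
    calc ‖A (I w)‖ ≤ ‖A‖ * ‖I w‖ := A.le_opNorm _
      _ ≤ a * (2 * ‖w‖) := by gcongr; exact (I.le_opNorm w).trans (by gcongr)
      _ = _ := by ring
  have hc0 : 0 ≤ c := le_trans (by positivity) hc1
  refine ContinuousLinearMap.opNorm_le_bound _ hc0 fun w => ?_
  rw [Prod.norm_def]
  refine max_le ?_ ?_
  · have e : (I w).1 = (ContinuousLinearMap.id ℝ X - P) w.1 - R1 w
        + ((ContinuousLinearMap.fst ℝ X Y).comp A) (A (I w)) := by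
      have := congrArg (fun L => L w) h1
      simp only [ContinuousLinearMap.comp_apply, ContinuousLinearMap.coe_fst',
        add_apply] at this
      conv_lhs => rw [hw w]
      simp [this, sub_sub]
    rw [e]
    calc _ ≤ ‖(ContinuousLinearMap.id ℝ X - P) w.1‖ + ‖R1 w‖
          + ‖((ContinuousLinearMap.fst ℝ X Y).comp A) (A (I w))‖ :=
            (norm_add_le _ _).trans (by gcongr; exact norm_sub_le _ _)
      _ ≤ ‖ContinuousLinearMap.id ℝ X - P‖ * ‖w‖ + ‖R1‖ * ‖w‖ + a1 * (a * 2 * ‖w‖) := by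
          gcongr
          · exact (ContinuousLinearMap.le_opNorm _ _).trans (by gcongr; exact norm_fst_le w)
          · exact ContinuousLinearMap.le_opNorm _ _
          · exact (ContinuousLinearMap.le_opNorm _ _).trans (by gcongr; exact hAI w)
      _ = (‖ContinuousLinearMap.id ℝ X - P‖ + ‖R1‖ + 2 * a1 * a) * ‖w‖ := by ring
      _ ≤ _ := by gcongr
  · have e : (I w).2 = (ContinuousLinearMap.id ℝ Y - Q) w.2 - R2 w
        + ((ContinuousLinearMap.snd ℝ X Y).comp A) (A (I w)) := by
      have := congrArg (fun L => L w) h2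
      simp only [ContinuousLinearMap.comp_apply, ContinuousLinearMap.coe_snd',
        add_apply] at this
      conv_lhs => rw [hw w]
      simp [this, sub_sub]
    rw [e]
    calc _ ≤ ‖(ContinuousLinearMap.id ℝ Y - Q) w.2‖ + ‖R2 w‖
          + ‖((ContinuousLinearMap.snd ℝ X Y).comp A) (A (I w))‖ :=
            (norm_add_le _ _).trans (by gcongr; exact norm_sub_le _ _)
      _ ≤ ‖ContinuousLinearMap.id ℝ Y - Q‖ * ‖w‖ + ‖R2‖ * ‖w‖ + a2 * (a * 2 * ‖w‖) := by
          gcongr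
          · exact (ContinuousLinearMap.le_opNorm _ _).trans (by gcongr; exact norm_snd_le w)
          · exact ContinuousLinearMap.le_opNorm _ _
          · exact (ContinuousLinearMap.le_opNorm _ _).trans (by gcongr; exact hAI w)
      _ = (‖ContinuousLinearMap.id ℝ Y - Q‖ + ‖R2‖ + 2 * a2 * a) * ‖w‖ := by ring
      _ ≤ _ := by gcongr

/-- The scaling as a continuous linear map. -/
def scaleL (X Y : Type*) [NormedAddCommGroup X] [NormedSpace ℝ X]
    [NormedAddCommGroup Y] [NormedSpace ℝ Y] (δ : ℝ) : X × Y →L[ℝ] X × Y :=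
  (ContinuousLinearMap.id ℝ X).prodMap (δ • ContinuousLinearMap.id ℝ Y)

lemma scaleL_apply (δ : ℝ) (z : X × Y) : scaleL X Y δ z = scaleY δ z := rfl

lemma norm_scaleL_le {δ : ℝ} (h0 : 0 < δ) (h1 : δ ≤ 1) : ‖scaleL X Y δ‖ ≤ 1 := by
  refine ContinuousLinearMap.opNorm_le_bound _ zero_le_one fun w => ?_
  rw [scaleL_apply, scaleY, one_mul, Prod.norm_def]
  refine max_le (norm_fst_le w) ?_
  rw [norm_smul, Real.norm_of_nonneg h0.le]
  exact (mul_le_of_le_one_left (norm_nonneg _) h1).trans (norm_snd_le w)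

lemma norm_inr_le' : ‖ContinuousLinearMap.inr ℝ X Y‖ ≤ 1 := by
  refine ContinuousLinearMap.opNorm_le_bound _ zero_le_one fun w => ?_
  simp [Prod.norm_def]

lemma norm_inl_le' : ‖ContinuousLinearMap.inl ℝ X Y‖ ≤ 1 := by
  refine ContinuousLinearMap.opNorm_le_bound _ zero_le_one fun w => ?_
  simp [Prod.norm_def]

lemma scaled_core [CompleteSpace X] [CompleteSpace Y] (T : X × Y → X × Y) (hT : Differentiable ℝ T)
    (z : X × Y) (G : X × Y →L[ℝ] X) (Q : Y →L[ℝ] Y) (δ : ℝ) (hδ0 : 0 < δ) (hδ1 : δ ≤ 1)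
    (e1 e2 : ℝ)
    (h1 : ‖(ContinuousLinearMap.fst ℝ X Y).comp (fderiv ℝ T z) - ContinuousLinearMap.fst ℝ X Y
      - G‖ ≤ e1)
    (h2 : ‖(ContinuousLinearMap.snd ℝ X Y).comp (fderiv ℝ T z) - ContinuousLinearMap.snd ℝ X Y
      - Q.comp (ContinuousLinearMap.snd ℝ X Y)‖ ≤ e2)
    (a1 a2 a c : ℝ) (ha1 : ‖G‖ + (e1 + δ * ‖G‖) ≤ a1) (ha2 : ‖Q‖ + δ⁻¹ * e2 ≤ a2)
    (h1a : a1 ≤ a) (h2a : a2 ≤ a) (ha : a ≤ 1 / 2)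
    (hc1 : ‖ContinuousLinearMap.id ℝ X - G.comp (ContinuousLinearMap.inl ℝ X Y)‖
      + (e1 + δ * ‖G‖) + 2 * a1 * a ≤ c)
    (hc2 : ‖ContinuousLinearMap.id ℝ Y - Q‖ + δ⁻¹ * e2 + 2 * a2 * a ≤ c) :
    IsUnit (fderiv ℝ (fun w => scaleY δ⁻¹ (T (scaleY δ w))) (scaleY δ⁻¹ z)) ∧
    ‖(fderiv ℝ (fun w => scaleY δ⁻¹ (T (scaleY δ w))) (scaleY δ⁻¹ z)).inverse‖ ≤ c := by
  set S := scaleL X Y δ with hS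
  set S' := scaleL X Y δ⁻¹ with hS'
  have hSz : S (scaleY δ⁻¹ z) = z := by
    rw [hS, scaleL_apply]
    ext <;> simp [scaleY, smul_smul, hδ0.ne']
  have hder : fderiv ℝ (fun w => scaleY δ⁻¹ (T (scaleY δ w))) (scaleY δ⁻¹ z)
      = S'.comp ((fderiv ℝ T z).comp S) := by
    have e : (fun w => scaleY δ⁻¹ (T (scaleY δ w))) = fun w => S' (T (S w)) := by
      ext1 w; rw [hS, hS', scaleL_apply, scaleL_apply]
    rw [e]
    have hT' : HasFDerivAt T (fderiv ℝ T z) (S (scaleY δ⁻¹ z)) := by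
      rw [hSz]; exact (hT z).hasFDerivAt
    exact (S'.hasFDerivAt.comp _ (hT'.comp _ S.hasFDerivAt)).fderiv
  set ε1 := (ContinuousLinearMap.fst ℝ X Y).comp (fderiv ℝ T z) - ContinuousLinearMap.fst ℝ X Y
      - G with hε1
  set ε2 := (ContinuousLinearMap.snd ℝ X Y).comp (fderiv ℝ T z) - ContinuousLinearMap.snd ℝ X Y
      - Q.comp (ContinuousLinearMap.snd ℝ X Y) with hε2
  have hSn : ‖S‖ ≤ 1 := norm_scaleL_le hδ0 hδ1
  set R1 : X × Y →L[ℝ] X := ε1.comp S + δ • (G.comp ((ContinuousLinearMap.inr ℝ X Y).comp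
    (ContinuousLinearMap.snd ℝ X Y))) with hR1
  set R2 : X × Y →L[ℝ] Y := δ⁻¹ • ε2.comp S with hR2
  have hR1n : ‖R1‖ ≤ e1 + δ * ‖G‖ := by
    refine (norm_add_le _ _).trans (add_le_add ?_ ?_)
    · exact ((ContinuousLinearMap.opNorm_comp_le _ _).trans
        (mul_le_of_le_one_right (norm_nonneg _) hSn)).trans h1
    · rw [norm_smul, Real.norm_of_nonneg hδ0.le]
      gcongr
      refine (ContinuousLinearMap.opNorm_comp_le _ _).trans
        (mul_le_of_le_one_right (norm_nonneg _) ?_)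
      refine (ContinuousLinearMap.opNorm_comp_le _ _).trans
        (mul_le_one₀ norm_inr_le' (norm_nonneg _) (ContinuousLinearMap.norm_snd_le ..))
  have hR2n : ‖R2‖ ≤ δ⁻¹ * e2 := by
    rw [hR2, norm_smul, Real.norm_of_nonneg (inv_nonneg.2 hδ0.le)]
    gcongr
    exact ((ContinuousLinearMap.opNorm_comp_le _ _).trans
        (mul_le_of_le_one_right (norm_nonneg _) hSn)).trans h2
  have hPn : ‖G.comp (ContinuousLinearMap.inl ℝ X Y)‖ ≤ ‖G‖ :=
    (ContinuousLinearMap.opNorm_comp_le _ _).trans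
      (mul_le_of_le_one_right (norm_nonneg _) norm_inl_le')
  have hsplit : ∀ w : X × Y, ∀ c : ℝ, G (w.1, c • w.2) = G (w.1, 0) + c • G (0, w.2) := by
    intro w c
    rw [← map_smul, ← map_add]
    simp
  have key := op_final (S'.comp ((fderiv ℝ T z).comp S) - 1)
    (G.comp (ContinuousLinearMap.inl ℝ X Y)) Q R1 R2 ?_ ?_ a1 a2 a c (by linarith) (by linarith)
    h1a h2a ha (by linarith) (by linarith)
  · rw [add_sub_cancel] at key
    rwa [hder]
  · refine ContinuousLinearMap.ext fun w => ?_
    simp [hR1, hε1, hS, hS', scaleL_apply, scaleY, hsplit]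
    abel
  · refine ContinuousLinearMap.ext fun w => ?_
    simp [hR2, hε2, hS, hS', scaleL_apply, scaleY, smul_sub, smul_smul, hδ0.ne']

lemma Bp_ge (p : X × Y → X) (N : ℕ) (hN : 1 ≤ N) (hp : IsHomogPoly N p) (V : Set X) (ρ : ℝ)
    (h0 : (0 : X) ∉ V) (hH1 : HypH1 p V ρ N) : (N : ℝ) * apC p V ρ N ≤ BpC p V ρ N := by
  have hg : IsHomogPoly N (fun z : X => p (z, 0)) := by
    simpa using hp.comp_clm (ContinuousLinearMap.inl ℝ X Y)
  obtain ⟨n, rfl⟩ : ∃ n, N = n + 1 := ⟨N - 1, by omega⟩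
  obtain ⟨C, hC, hb⟩ := hg.fderiv.norm_le
  unfold HypH1 at hH1
  set a := apC p V ρ (n + 1) with ha
  have hs : sSup ((fun x : X => (‖x + p (x, 0)‖ - ‖x‖) / ‖x‖ ^ (n + 1)) '' Vrho V ρ) = -a := by
    rw [ha, apC, neg_neg]
  have hbdd : BddAbove ((fun x : X => (‖x + p (x, 0)‖ - ‖x‖) / ‖x‖ ^ (n + 1)) '' Vrho V ρ) := by
    by_contra h
    rw [Real.sSup_of_not_bddAbove h] at hs
    linarith
  have hne : (Vrho V ρ).Nonempty := by
    by_contra h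
    rw [Set.not_nonempty_iff_eq_empty] at h
    rw [h, Set.image_empty, Real.sSup_empty] at hs
    linarith
  obtain ⟨x, hx⟩ := hne
  have hx0 : x ≠ 0 := fun h => h0 (h ▸ hx.1)
  have h1 := le_csSup hbdd (Set.mem_image_of_mem _ hx)
  have hxp : 0 < ‖x‖ := norm_pos_iff.2 hx0
  rw [hs, div_le_iff₀ (by positivity)] at h1
  have h2 := sSup_bound (Vrho V ρ) n (fun x => fderiv ℝ (fun z : X => p (z, 0)) x) C hb hx hx0
  change _ ≤ 1 + BpC p V ρ (n + 1) * ‖x‖ ^ n at h2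
  set b := BpC p V ρ (n + 1)
  have h3 := euler_identity hg x
  have h4 : ‖x - ((n + 1 : ℕ) : ℝ) • p (x, 0)‖ ≤ (1 + b * ‖x‖ ^ n) * ‖x‖ := by
    have := (ContinuousLinearMap.id ℝ X - fderiv ℝ (fun z : X => p (z, 0)) x).le_of_opNorm_le h2 x
    simpa [h3] using this
  have h5 : ((n + 1 : ℕ) + 1 : ℝ) * ‖x‖ ≤ ((n + 1 : ℕ) : ℝ) * ‖x + p (x, 0)‖
      + ‖x - ((n + 1 : ℕ) : ℝ) • p (x, 0)‖ := by
    have e : (((n + 1 : ℕ) : ℝ) + 1) • x = ((n + 1 : ℕ) : ℝ) • (x + p (x, 0))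
      + (x - ((n + 1 : ℕ) : ℝ) • p (x, 0)) := by module
    have := norm_add_le (((n + 1 : ℕ) : ℝ) • (x + p (x, 0))) (x - ((n + 1 : ℕ) : ℝ) • p (x, 0))
    rw [← e, norm_smul, norm_smul, Real.norm_of_nonneg (by positivity),
      Real.norm_of_nonneg (by positivity)] at this
    exact this
  have h6 : ((n + 1 : ℕ) : ℝ) * ‖x + p (x, 0)‖ ≤ ((n + 1 : ℕ) : ℝ) * (‖x‖ - a * ‖x‖ ^ (n + 1)) := by
    gcongr; linarith
  have h7 : (((n + 1 : ℕ) : ℝ) * a) * ‖x‖ ^ (n + 1) ≤ b * ‖x‖ ^ (n + 1) := by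
    have : (1 + b * ‖x‖ ^ n) * ‖x‖ = ‖x‖ + b * ‖x‖ ^ (n + 1) := by ring
    rw [this] at h4
    nlinarith
  exact le_of_mul_le_mul_right h7 (by positivity)

/-- The data of the second row of the differential. -/
lemma second_row (Fm : X × Y → X × Y) (p : X × Y → X) (q : X × Y → Y) (N M d : ℕ)
    (hN : 2 ≤ N) (hM : 2 ≤ M) (hNd : N + 1 ≤ d) (hq : IsHomogPoly M q)
    (hT : (fun z => Fm z - taylorPoly0 Fm d z) =O[𝓝 0] (fun z => ‖z‖ ^ (d + 1)))
    (hf : (fun z => (Fm z).2 - z.2 - q z) =O[𝓝 0] (fun z => ‖z‖ ^ (M + 1)))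
    (V : Set X) (hV : IsOpen V) (h0 : (0 : X) ∉ V) (ρ₀ : ℝ)
    (hH2 : HypH2 p q V ρ₀ N M) (B : ℝ) (hB0 : 0 < B) (hB : (N : ℝ) * apC p V ρ₀ N < B)
    (K : ℝ) (hK : 0 ≤ K) :
    ∃ (m : ℕ) (Q : X → Y →L[ℝ] Y) (b β C ρ : ℝ), 2 ≤ m ∧ 0 ≤ C ∧ 0 < ρ ∧ b < β ∧
      (∀ t : ℝ, 0 ≤ t → β * t ^ (m - 1) ≤ B * t ^ (N - 1)) ∧
      ∀ x ∈ Vrho V ρ₀, ‖x‖ < ρ → ∀ z : X × Y, ‖z - (x, 0)‖ ≤ K * ‖x‖ ^ 2 →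
        ‖(ContinuousLinearMap.snd ℝ X Y).comp (fderiv ℝ (taylorPoly0 Fm d) z)
          - ContinuousLinearMap.snd ℝ X Y - (Q x).comp (ContinuousLinearMap.snd ℝ X Y)‖
            ≤ C * ‖x‖ ^ m ∧
        ‖Q x‖ ≤ C * ‖x‖ ^ (m - 1) ∧
        ‖ContinuousLinearMap.id ℝ Y - Q x‖ ≤ 1 + b * ‖x‖ ^ (m - 1) := by
  have hnx : ∀ x : X, ‖((x, 0) : X × Y)‖ = ‖x‖ := fun x => by simp [Prod.norm_def]
  rcases lt_or_ge N M with hNM | hMN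
  · -- case `N < M`
    obtain ⟨C, hC, ρ, hρ, hb⟩ := row_est Fm d N hN hNd (ContinuousLinearMap.snd ℝ X Y)
      (ContinuousLinearMap.snd ℝ X Y) (fun _ => 0) isHomogPoly_zero hT
      (by
        have h1 := (hf.trans (bigO_pow_le (show N + 1 ≤ M + 1 by omega))).add
          (hq.bigO.trans (bigO_pow_le (show N + 1 ≤ M by omega)))
        refine h1.congr_left fun z => ?_
        simp) K hK
    refine ⟨N, fun _ => 0, 0, B, C, ρ, hN, hC, hρ, hB0, fun t _ => le_rfl, ?_⟩
    intro x hx hxρ z hz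
    refine ⟨?_, ?_, ?_⟩
    · have := hb (x, 0) z (by rwa [hnx]) (by rwa [hnx])
      rw [hnx] at this
      simpa using this
    · rw [norm_zero]; positivity
    · simpa using ContinuousLinearMap.norm_id_le
  · -- case `M ≤ N`
    obtain ⟨C, hC, ρ, hρ, hb⟩ := row_est Fm d M hM (by omega) (ContinuousLinearMap.snd ℝ X Y)
      (ContinuousLinearMap.snd ℝ X Y) q hq hT (by simpa using hf) K hK
    obtain ⟨n, rfl⟩ : ∃ n, M = n + 1 := ⟨M - 1, by omega⟩
    obtain ⟨C2, hC2, hb2⟩ := hq.fderiv.norm_le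
    have hQeq : ∀ x : X, fderiv ℝ (fun y : Y => q (x, y)) 0
        = (fderiv ℝ q (x, 0)).comp (ContinuousLinearMap.inr ℝ X Y) := by
      intro x
      have h1 : HasFDerivAt (fun y : Y => ((x, y) : X × Y)) (ContinuousLinearMap.inr ℝ X Y) 0 :=
        hasFDerivAt_prodMk_right x 0
      exact ((hq.differentiable (x, 0)).hasFDerivAt.comp (0 : Y) h1).fderiv
    have hQn : ∀ x : X, ‖fderiv ℝ (fun y : Y => q (x, y)) 0‖ ≤ C2 * ‖x‖ ^ n := by
      intro x
      rw [hQeq]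
      have := hb2 (x, 0)
      rw [hnx] at this
      exact ((ContinuousLinearMap.opNorm_comp_le _ _).trans
        (mul_le_of_le_one_right (norm_nonneg _) norm_inr_le')).trans this
    have hQsnd : ∀ x ∈ Vrho V ρ₀, (fderiv ℝ (fun y : Y => q (x, y)) 0).comp
        (ContinuousLinearMap.snd ℝ X Y) = fderiv ℝ q (x, 0) := by
      intro x hx
      have hz : (fderiv ℝ q (x, 0)).comp (ContinuousLinearMap.inl ℝ X Y) = 0 := by
        have h1 : HasFDerivAt (fun y : X => ((y, 0) : X × Y)) (ContinuousLinearMap.inl ℝ X Y) x :=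
          hasFDerivAt_prodMk_left x 0
        have h2 := (hq.differentiable (x, 0)).hasFDerivAt.comp x h1
        have hnh : Vrho V ρ₀ ∈ 𝓝 x := (hV.inter isOpen_ball).mem_nhds hx
        have h3 : HasFDerivAt (q ∘ fun y : X => ((y, 0) : X × Y)) (0 : X →L[ℝ] Y) x := by
          refine (hasFDerivAt_const (0 : Y) x).congr_of_eventuallyEq ?_
          filter_upwards [hnh] with y hy
          exact hH2.1 y hy
        exact h2.unique h3
      rw [hQeq]
      refine ContinuousLinearMap.ext fun w => ?_
      have hw : fderiv ℝ q (x, 0) (w.1, 0) = 0 := by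
        simpa using congrArg (fun L => L w.1) hz
      have : w = (w.1, 0) + (0, w.2) := by simp
      conv_rhs => rw [this, map_add, hw, zero_add]
      simp
    have hmain : ∀ x ∈ Vrho V ρ₀, ‖x‖ < ρ → ∀ z : X × Y, ‖z - (x, 0)‖ ≤ K * ‖x‖ ^ 2 →
        ‖(ContinuousLinearMap.snd ℝ X Y).comp (fderiv ℝ (taylorPoly0 Fm d) z)
          - ContinuousLinearMap.snd ℝ X Y - (fderiv ℝ (fun y : Y => q (x, y)) 0).comp
            (ContinuousLinearMap.snd ℝ X Y)‖ ≤ (C + C2) * ‖x‖ ^ (n + 1) ∧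
        ‖fderiv ℝ (fun y : Y => q (x, y)) 0‖ ≤ (C + C2) * ‖x‖ ^ (n + 1 - 1) ∧
        ‖ContinuousLinearMap.id ℝ Y - fderiv ℝ (fun y : Y => q (x, y)) 0‖
          ≤ 1 + (-BqC q V ρ₀ (n + 1)) * ‖x‖ ^ (n + 1 - 1) := by
      intro x hx hxρ z hz
      refine ⟨?_, ?_, ?_⟩
      · rw [hQsnd x hx]
        have := hb (x, 0) z (by rwa [hnx]) (by rwa [hnx])
        rw [hnx] at this
        refine this.trans ?_
        gcongr
        linarith
      · refine (hQn x).trans ?_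
        rw [Nat.add_sub_cancel]
        gcongr
        linarith
      · have hx0 : x ≠ 0 := fun h => h0 (h ▸ hx.1)
        have := sSup_bound (Vrho V ρ₀) n (fun x => fderiv ℝ (fun y : Y => q (x, y)) 0) C2 hQn hx hx0
        rw [BqC, neg_neg]
        exact this
    rcases hMN.lt_or_eq with h | h
    · refine ⟨n + 1, fun x => fderiv ℝ (fun y : Y => q (x, y)) 0, -BqC q V ρ₀ (n + 1), 0, C + C2, ρ,
        hM, by positivity, hρ, by linarith [hH2.2.1 h], fun t ht => ?_, hmain⟩
      rw [zero_mul]; positivity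
    · have := hH2.2.2 h
      refine ⟨n + 1, fun x => fderiv ℝ (fun y : Y => q (x, y)) 0, -BqC q V ρ₀ (n + 1), B, C + C2, ρ,
        hM, by positivity, hρ, by linarith, fun t ht => ?_, hmain⟩
      rw [h]


end Aux

/-- Lemma 6.4: after the scaling `S_δ(x,y) = (x, δy)`, the inverse of the
differential of the Taylor polynomial `P` of `F` along the approximate parametrization is
a weak expansion: `‖(DP̃)⁻¹(K̃^≤(x))‖ ≤ 1 + B‖x‖^{N-1}`. -/
theorem scaled_weak_expansion_estimate
    {E F : Type*} [NormedAddCommGroup E] [NormedSpace ℝ E] [FiniteDimensional ℝ E]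
    [NormedAddCommGroup F] [NormedSpace ℝ F] [FiniteDimensional ℝ F]
    (U : Set (E × F)) (hUopen : IsOpen U) (hU0 : (0 : E × F) ∈ U)
    (Fm : E × F → E × F) (p : E × F → E) (q : E × F → F) (N M : ℕ)
    (hpar : ParabolicForm U Fm p q N M)
    (r : ℕ∞) (hFsmooth : ContDiffOn ℝ r Fm U)
    (V : Set E) (hVopen : IsOpen V) (hVstar : StarShaped0 V)
    (ρ₀ : ℝ) (hρ₀ : 0 < ρ₀)
    (hH1 : HypH1 p V ρ₀ N) (hH2 : HypH2 p q V ρ₀ N M) (hH3 : HypH3 p V ρ₀ N)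
    (ℓ : ℕ) (hℓlow : ell0C p V ρ₀ N M < (ℓ : ℝ)) (hℓr : (ℓ : ℕ∞) ≤ r)
    (Kle : E → E × F) (hKleU : MapsTo Kle (Vrho V ρ₀) U)
    (hKleSm : ContDiffOn ℝ 1 Kle (Vrho V ρ₀))
    (hKleOrd : BigOOn (fun x => Kle x - (x, 0)) (Vrho V ρ₀) 2) :
    ∀ B : ℝ, BpC p V ρ₀ N < B →
      ∃ ρ > (0 : ℝ), ρ ≤ ρ₀ ∧ ∃ δ > (0 : ℝ), ∀ x ∈ Vrho V ρ,
        IsUnit (fderiv ℝ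
          (fun z => scaleY δ⁻¹ (taylorPoly0 Fm (ℓ - 1) (scaleY δ z)))
          (scaleY δ⁻¹ (Kle x))) ∧
        ‖(fderiv ℝ (fun z => scaleY δ⁻¹ (taylorPoly0 Fm (ℓ - 1) (scaleY δ z)))
            (scaleY δ⁻¹ (Kle x))).inverse‖ ≤ 1 + B * ‖x‖ ^ (N - 1) := by
  intro B hB
  haveI : CompleteSpace E := FiniteDimensional.complete ℝ E
  haveI : CompleteSpace F := FiniteDimensional.complete ℝ F
  obtain ⟨hN, hM, hp, hq, hf1, hf2⟩ := hpar
  rw [hUopen.nhdsWithin_eq hU0] at hf1 hf2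
  have h0 : (0 : E) ∉ V := by
    have := hVstar.1
    rw [hVopen.frontier_eq] at this
    exact this.2
  have hNa := Bp_ge p N (by omega) hp V ρ₀ h0 hH1
  have ha : 0 < apC p V ρ₀ N := hH1
  have hN2 : (2 : ℝ) ≤ N := by exact_mod_cast hN
  have hB0 : 0 < B := by
    have : 0 < (N : ℝ) * apC p V ρ₀ N := by positivity
    linarith
  have hℓ : 2 * N ≤ ℓ := by
    have h1 : (N : ℝ) ≤ BpC p V ρ₀ N / apC p V ρ₀ N := by
      rw [le_div_iff₀ ha]; exact hNa
    have h2 := le_max_right (etaC N M - ApC p V ρ₀ N / dpC p V ρ₀ N) 0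
    unfold ell0C at hℓlow
    have h3 : ((2 * N : ℕ) : ℝ) < ((ℓ + 1 : ℕ) : ℝ) := by push_cast; linarith
    have h4 : 2 * N < ℓ + 1 := by exact_mod_cast h3
    omega
  obtain ⟨d, rfl⟩ : ∃ d, ℓ = d + 1 := ⟨ℓ - 1, by omega⟩
  rw [Nat.add_sub_cancel]
  have hNd : N + 1 ≤ d := by omega
  have hsm : ContDiffAt ℝ (((d + 1 : ℕ) : ℕ∞) : WithTop ℕ∞) Fm 0 :=
    (hFsmooth.contDiffAt (hUopen.mem_nhds hU0)).of_le (by exact_mod_cast hℓr)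
  have hT := taylor_bigO hsm
  obtain ⟨K0, hK0⟩ := hKleOrd
  set K := max K0 0 with hKdef
  have hK : 0 ≤ K := le_max_right _ _
  have hKle : ∀ x ∈ Vrho V ρ₀, ‖Kle x - (x, 0)‖ ≤ K * ‖x‖ ^ 2 := by
    intro x hx
    have h1 := hK0 x hx
    rw [Real.rpow_two] at h1
    exact h1.trans (mul_le_mul_of_nonneg_right (le_max_left _ _) (by positivity))
  obtain ⟨C1, hC1, ρ1, hρ1, hrow1⟩ := row_est Fm d N hN hNd (ContinuousLinearMap.fst ℝ E F)
    (ContinuousLinearMap.fst ℝ E F) p hp hT hf1 K hK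
  obtain ⟨m, Q, b, β, C2, ρ2, hm, hC2, hρ2, hbβ, hβ, hrow2⟩ :=
    second_row Fm p q N M d hN hM hNd hq hT hf2 V hVopen h0 ρ₀ hH2 B hB0 (by linarith) K hK
  obtain ⟨n, rfl⟩ : ∃ n, N = n + 1 := ⟨N - 1, by omega⟩
  obtain ⟨k, rfl⟩ : ∃ k, m = k + 1 := ⟨m - 1, by omega⟩
  simp only [Nat.add_sub_cancel] at hβ hrow2 ⊢
  obtain ⟨C3, hC3, hG⟩ := hp.fderiv.norm_le
  set C := C1 + C2 + C3 + 1 with hCdef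
  have hCpos : 0 < C := by positivity
  set Δ := B - BpC p V ρ₀ (n + 1) with hΔ
  have hΔ0 : 0 < Δ := by linarith
  obtain ⟨δ, hδ0, hδ1, hδ⟩ : ∃ δ : ℝ, 0 < δ ∧ δ ≤ 1 ∧ C * δ ≤ Δ / 2 := by
    refine ⟨min 1 (Δ / 2 / C), by positivity, min_le_left _ _, ?_⟩
    have := min_le_right (1 : ℝ) (Δ / 2 / C)
    rw [le_div_iff₀ hCpos] at this
    linarith
  have small : ∀ A ε : ℝ, 0 ≤ A → 0 < ε → ∃ s > (0 : ℝ), ∀ t, t < s → A * t ≤ ε := by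
    intro A ε hA hε
    refine ⟨ε / (A + 1), by positivity, fun t ht => ?_⟩
    rw [lt_div_iff₀ (by positivity)] at ht
    rcases le_or_gt t 0 with h | h
    · have := mul_nonpos_of_nonneg_of_nonpos hA h
      linarith
    · linarith
  obtain ⟨s1, hs1, hS1⟩ := small (3 * C) (1 / 2) (by positivity) (by norm_num)
  obtain ⟨s2, hs2, hS2⟩ := small (C + 18 * C ^ 2) (Δ / 2) (by positivity) (by positivity)
  obtain ⟨s3, hs3, hS3⟩ := small (δ⁻¹ * C + 12 * C ^ 2) (β - b) (by positivity) (by linarith)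
  obtain ⟨s4, hs4, hS4⟩ := small δ⁻¹ 1 (by positivity) (by norm_num)
  set ρ := min ρ₀ (min (min ρ1 ρ2) (min 1 (min (min s1 s2) (min s3 s4)))) with hρ
  refine ⟨ρ, by positivity, min_le_left _ _, δ, hδ0, ?_⟩
  intro x hx
  have hxρ : ‖x‖ < ρ := by simpa using hx.2
  simp only [hρ, lt_min_iff] at hxρ
  obtain ⟨hx0, ⟨hx1, hx2⟩, hxone, ⟨hxs1, hxs2⟩, hxs3, hxs4⟩ := hxρ
  have hxV : x ∈ Vrho V ρ₀ := ⟨hx.1, by simpa using hx0⟩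
  have hxne : x ≠ 0 := fun h => h0 (h ▸ hx.1)
  have hnx : ‖((x, 0) : E × F)‖ = ‖x‖ := by simp [Prod.norm_def]
  have hr1 := hrow1 (x, 0) (Kle x) (by rw [hnx]; exact hx1) (by rw [hnx]; exact hKle x hxV)
  obtain ⟨hr2, hQ, hidQ⟩ := hrow2 x hxV hx2 (Kle x) (hKle x hxV)
  have hGx := hG (x, 0)
  rw [hnx] at hr1 hGx
  set G := fderiv ℝ p (x, 0) with hGdef
  have hcomp : G.comp (ContinuousLinearMap.inl ℝ E F) = fderiv ℝ (fun z : E => p (z, 0)) x := by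
    have h1 : HasFDerivAt p G ((x, 0) : E × F) := (hp.differentiable _).hasFDerivAt
    exact (h1.comp x (hasFDerivAt_prodMk_left x (0 : F))).fderiv.symm
  have hg : IsHomogPoly (n + 1) (fun z : E => p (z, 0)) := by
    simpa using hp.comp_clm (ContinuousLinearMap.inl ℝ E F)
  obtain ⟨C4, hC4, hb4⟩ := hg.fderiv.norm_le
  have hidG := sSup_bound (Vrho V ρ₀) n (fun x => fderiv ℝ (fun z : E => p (z, 0)) x) C4 hb4
    hxV hxne
  change _ ≤ 1 + BpC p V ρ₀ (n + 1) * ‖x‖ ^ n at hidG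
  simp only [← hcomp] at hidG
  have t1 := hS1 _ hxs1
  have t2 := hS2 _ hxs2
  have t3 := hS3 _ hxs3
  have t4 := hS4 _ hxs4
  set t := ‖x‖ with ht
  have ht0 : 0 ≤ t := norm_nonneg x
  have hCC1 : C1 ≤ C := by linarith
  have hCC2 : C2 ≤ C := by linarith
  have hCC3 : C3 ≤ C := by linarith
  have hu0 : 0 ≤ t ^ n := by positivity
  have hv0 : 0 ≤ t ^ k := by positivity
  have hun : t ^ n ≤ t := by
    simpa using pow_le_pow_of_le_one ht0 hxone.le (by omega : 1 ≤ n)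
  have hvn : t ^ k ≤ t := by
    simpa using pow_le_pow_of_le_one ht0 hxone.le (by omega : 1 ≤ k)
  have hβt := hβ t ht0
  rw [pow_succ] at hr1 hr2
  have e1 : C1 * (t ^ n * t) ≤ C * t * t ^ n := by
    have := mul_le_mul_of_nonneg_right hCC1 (mul_nonneg hu0 ht0)
    linarith
  have e2 : C2 * (t ^ k * t) ≤ C * t * t ^ k := by
    have := mul_le_mul_of_nonneg_right hCC2 (mul_nonneg hv0 ht0)
    linarith
  have e3 : ‖G‖ ≤ C * t ^ n := hGx.trans (mul_le_mul_of_nonneg_right hCC3 hu0)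
  have e4 : ‖Q x‖ ≤ C * t ^ k := hQ.trans (mul_le_mul_of_nonneg_right hCC2 hv0)
  have e5 : δ * ‖G‖ ≤ δ * C * t ^ n := by
    have := mul_le_mul_of_nonneg_left e3 hδ0.le
    linarith
  have f1 : C * t * t ^ n ≤ C * t ^ n := by
    have := mul_le_mul_of_nonneg_left hxone.le (mul_nonneg hCpos.le hu0)
    linarith
  have f2 : δ * C * t ^ n ≤ C * t ^ n := by
    have := mul_le_mul_of_nonneg_right hδ1 (mul_nonneg hCpos.le hu0)
    linarith
  have f3 : δ⁻¹ * (C * t * t ^ k) ≤ C * t ^ k := by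
    have := mul_le_mul_of_nonneg_right t4 (mul_nonneg hCpos.le hv0)
    linarith
  have g1 := mul_le_mul_of_nonneg_right t2 hu0
  have g2 := mul_le_mul_of_nonneg_right t3 hv0
  have g3 := mul_le_mul_of_nonneg_right hδ hu0
  refine scaled_core (taylorPoly0 Fm d) (taylorPoly0_differentiable Fm d) (Kle x) G (Q x) δ
    hδ0 hδ1 (C * t * t ^ n) (C * t * t ^ k) (hr1.trans e1) (hr2.trans e2)
    (3 * C * t ^ n) (2 * C * t ^ k) (3 * C * t) (1 + B * t ^ n) ?_ ?_ ?_ ?_ t1 ?_ ?_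
  · linarith
  · linarith
  · exact mul_le_mul_of_nonneg_left hun (by positivity)
  · have := mul_le_mul_of_nonneg_left hvn (by positivity : 0 ≤ 2 * C)
    have := mul_nonneg hCpos.le ht0
    linarith
  · have : B * t ^ n = BpC p V ρ₀ (n + 1) * t ^ n + Δ / 2 * t ^ n + Δ / 2 * t ^ n := by
      rw [hΔ]; ring
    have : 2 * (3 * C * t ^ n) * (3 * C * t) = 18 * C ^ 2 * t * t ^ n := by ring
    linarith
  · have : 2 * (2 * C * t ^ k) * (3 * C * t) = 12 * C ^ 2 * t * t ^ k := by ring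
    linarith
end
end
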